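/- arXiv:2503.12760 — 3 statements merged into one kernel-verified Lean document; each statement's English description precedes it below -/
import Mathlib

section
/- Let Π̃ be a fixed finite set of policies, π_0 a baseline policy, 𝒮 the set of guardrail outcomes, and w_j ∈ [−1,0] for j ∈ 𝒮. For π ∈ Π̃ and j ∈ 𝒮 define the lower bound Ĉ_j^{IPW}(π, α) = (V̂_j^{IPW}(π) − (1+w_j)V̂_j^{IPW}(π_0)) − (σ̂_j(π) √(2 log(3|Π̃||𝒮|/(2α))/n) + 3 R_j log(3|Π̃||𝒮|/(2α))/n), where R_j = (2+w_j)/c and σ̂_j²(π) = (1/n) Σ_{i=1}^n ((ψ_j^{IPW}(O_i, π; e) − (1+w_j)ψ_j^{IPW}(O_i, π_0; e)) − (V̂_j^{IPW}(π) − (1+w_j)V̂_j^{IPW}(π_0)))². Then under strict positivity, for every sample size n ∈ ℕ, P(∃ π ∈ Π̃, j ∈ 𝒮 : V_j(π) − (1+w_j)V_j(π_0) < Ĉ_j^{IPW}(π, α)) ≤ α, i.e., the Ĉ_j^{IPW}(π, α) are simultaneous finite-sample 1−α lower confidence bounds for the weighted policy-value differences. -/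
set_option autoImplicit false

open MeasureTheory ProbabilityTheory

/-- IPW score `ψ_j^{IPW}(o, π; e)`. -/
noncomputable def psiIPW {𝒳 : Type*} (K dY : ℕ)
    (e : Fin K → 𝒳 → ℝ) (π : Fin K → 𝒳 → ℝ) (j : Fin dY)
    (o : 𝒳 × Fin K × (Fin dY → ℝ)) : ℝ :=
  ∑ k : Fin K, π k o.1 * (if o.2.1 = k then o.2.2 j / e k o.1 else 0)

/-- IPW estimator `V̂_j^{IPW}(π)` from `n` observations. -/
noncomputable def VhatIPW {𝒳 : Type*} (K dY : ℕ) (n : ℕ)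
    (e : Fin K → 𝒳 → ℝ) (π : Fin K → 𝒳 → ℝ) (j : Fin dY)
    (d : Fin n → 𝒳 × Fin K × (Fin dY → ℝ)) : ℝ :=
  (1 / (n : ℝ)) * ∑ i, psiIPW K dY e π j (d i)

/-- Estimated weighted contrast `V̂_j^{IPW}(π) − (1+w_j) V̂_j^{IPW}(π₀)`. -/
noncomputable def DhatIPW {𝒳 : Type*} (K dY : ℕ) (n : ℕ)
    (e : Fin K → 𝒳 → ℝ) (π π₀ : Fin K → 𝒳 → ℝ) (j : Fin dY) (w : ℝ)
    (d : Fin n → 𝒳 × Fin K × (Fin dY → ℝ)) : ℝ :=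
  VhatIPW K dY n e π j d - (1 + w) * VhatIPW K dY n e π₀ j d

/-- Empirical variance `σ̂_j²(π)` of the per-observation IPW contrasts. -/
noncomputable def sigmahatSqIPW {𝒳 : Type*} (K dY : ℕ) (n : ℕ)
    (e : Fin K → 𝒳 → ℝ) (π π₀ : Fin K → 𝒳 → ℝ) (j : Fin dY) (w : ℝ)
    (d : Fin n → 𝒳 × Fin K × (Fin dY → ℝ)) : ℝ :=
  (1 / (n : ℝ)) * ∑ i,
    ((psiIPW K dY e π j (d i) - (1 + w) * psiIPW K dY e π₀ j (d i))
      - DhatIPW K dY n e π π₀ j w d) ^ 2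

/-- Empirical-Bernstein joint lower confidence bound `Ĉ_j^{IPW}(π, α)`, where `T = |Π̃|`,
`S = |𝒮|` and `R_j = (2+w_j)/c`. -/
noncomputable def ChatIPW {𝒳 : Type*} (K dY : ℕ) (n : ℕ)
    (e : Fin K → 𝒳 → ℝ) (π π₀ : Fin K → 𝒳 → ℝ) (j : Fin dY) (w : ℝ)
    (c α : ℝ) (T S : ℕ)
    (d : Fin n → 𝒳 × Fin K × (Fin dY → ℝ)) : ℝ :=
  DhatIPW K dY n e π π₀ j w d
    - (Real.sqrt (sigmahatSqIPW K dY n e π π₀ j w d)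
          * Real.sqrt (2 * Real.log (3 * T * S / (2 * α)) / n)
        + 3 * ((2 + w) / c) * Real.log (3 * T * S / (2 * α)) / n)


lemma ebx_exp_pos {x : ℝ} (h0 : 0 ≤ x) (h3 : x < 3) :
    Real.exp x ≤ 1 + x + x ^ 2 / (2 * (1 - x / 3)) := by
  have hs := NormedSpace.expSeries_div_hasSum_exp (𝔸 := ℝ) x
  rw [← Real.exp_eq_exp_ℝ] at hs
  have hs2 := (hasSum_nat_add_iff' 2).2 hs
  have hg := (hasSum_geometric_of_lt_one (r := x / 3) (by positivity) (by linarith)).mul_left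
    (x ^ 2 / 2)
  have := hasSum_le (fun k => ?_) hs2 hg
  · simp only [Finset.sum_range_succ, Finset.sum_range_zero] at this
    have e : x ^ 2 / (2 * (1 - x / 3)) = x ^ 2 / 2 * (1 - x / 3)⁻¹ := by
      have : (1 - x / 3) ≠ 0 := by linarith
      field_simp
    rw [e]
    norm_num at this
    linarith
  · have hf : (2 * 3 ^ k : ℝ) ≤ ((k + 2).factorial : ℝ) := by
      have : 2 * 3 ^ k ≤ (k + 2).factorial := by
        induction k with
        | zero => simp
        | succ k ih =>
          rw [show k + 1 + 2 = (k + 2) + 1 by ring, Nat.factorial_succ, pow_succ]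
          nlinarith
      exact_mod_cast this
    calc x ^ (k + 2) / ((k + 2).factorial : ℝ) ≤ x ^ (k + 2) / (2 * 3 ^ k) := by gcongr
      _ = x ^ 2 / 2 * (x / 3) ^ k := by rw [div_pow, pow_add]; field_simp

lemma ebx_exp_neg {x : ℝ} (h0 : 0 ≤ x) : Real.exp (-x) ≤ 1 - x + x ^ 2 / 2 := by
  have h1 := Real.quadratic_le_exp_of_nonneg h0
  have hp := Real.exp_pos x
  rw [Real.exp_neg, inv_le_iff_one_le_mul₀ hp]
  have : 0 ≤ 1 - x + x ^ 2 / 2 := by nlinarith [sq_nonneg (x - 1)]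
  nlinarith [sq_nonneg (x ^ 2)]

lemma ebx_exp_le {x y : ℝ} (hxy : x ≤ y) (h0 : 0 ≤ y) (h3 : y < 3) :
    Real.exp x ≤ 1 + x + x ^ 2 / (2 * (1 - y / 3)) := by
  have hy : 0 < 1 - y / 3 := by linarith
  rcases le_total 0 x with h | h
  · have := ebx_exp_pos h (by linarith)
    refine this.trans ?_
    gcongr
  · have := ebx_exp_neg (x := -x) (by linarith)
    rw [neg_neg] at this
    have h2 : x ^ 2 / 2 ≤ x ^ 2 / (2 * (1 - y / 3)) := by
      gcongr
      linarith
    nlinarith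

lemma ebx_det {σ r D V β k : ℝ} (hβ0 : 0 ≤ β) (hβ1 : β ≤ 1) (hr : 0 < r) (hσ : 0 ≤ σ)
    (hk : 0 ≤ k) (hcond : 9 / 4 * σ ^ 2 + k * (3 / 2 - β / 6) ^ 3 ≤ (3 / 2 - β / 6) ^ 4)
    (hD : D ≤ σ * r + β * r ^ 2 / 6) (hV : σ ^ 2 - k * σ * r ≤ V) (hVD : 0 ≤ V - D ^ 2) :
    D ≤ Real.sqrt (V - D ^ 2) * r + 3 * r ^ 2 / 2 := by
  by_contra! hlt
  set a := 3 / 2 - β / 6 with ha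
  have ha0 : 0 < a := by linarith
  set q := Real.sqrt (V - D ^ 2) with hq
  have hq0 : 0 ≤ q := Real.sqrt_nonneg _
  have hqq : q ^ 2 = V - D ^ 2 := Real.sq_sqrt hVD
  have h1 : r ^ 2 * q ^ 2 < (D - 3 * r ^ 2 / 2) ^ 2 := by
    rw [← mul_pow]
    apply pow_lt_pow_left₀ (by linarith) (by positivity) (by norm_num)
  have hqr : 0 ≤ q * r := by positivity
  set D0 := σ * r + β * r ^ 2 / 6 with hD0
  have h2 : (D - 3 * r ^ 2 / 2) ^ 2 ≤ (D0 - 3 * r ^ 2 / 2) ^ 2 := by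
    apply pow_le_pow_left₀ (by linarith) (by linarith)
  have h3 : D ^ 2 ≤ D0 ^ 2 := by
    apply pow_le_pow_left₀ _ hD
    nlinarith
  have har : a * r < σ := by
    have : 0 < (σ - a * r) * r := by
      have : 3 * r ^ 2 / 2 < D0 := by linarith
      rw [hD0] at this
      rw [ha]; nlinarith
    have := pos_of_mul_pos_left this hr.le
    linarith
  have h4 : r ^ 2 * (σ ^ 2 - k * σ * r) < (D0 - 3 * r ^ 2 / 2) ^ 2 + r ^ 2 * D0 ^ 2 := by
    have : r ^ 2 * (σ ^ 2 - k * σ * r - D0 ^ 2) ≤ r ^ 2 * q ^ 2 := by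
      apply mul_le_mul_of_nonneg_left _ (by positivity)
      linarith
    linarith
  have h5 : D0 - 3 * r ^ 2 / 2 = r * (σ - a * r) := by rw [hD0, ha]; ring
  have h6 : D0 = r * (σ + β * r / 6) := by rw [hD0]; ring
  have h7 : (σ ^ 2 - k * σ * r) < (σ - a * r) ^ 2 + r ^ 2 * (σ + β * r / 6) ^ 2 := by
    rw [h5, h6] at h4
    have hr2 : 0 < r ^ 2 := by positivity
    refine lt_of_mul_lt_mul_left (a := r ^ 2) ?_ hr2.le
    linarith
  have h8 : σ * (2 * a - k) < r * (a ^ 2 + (σ + β * r / 6) ^ 2) := by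
    refine lt_of_mul_lt_mul_left (a := r) ?_ hr.le
    linarith
  have h9 : a * (σ + β * r / 6) ≤ 3 / 2 * σ := by
    have : a * σ + β / 6 * (a * r) ≤ a * σ + β / 6 * σ := by gcongr
    have e : a * σ + β / 6 * σ = 3 / 2 * σ := by rw [ha]; ring
    linarith
  have hσ0 : 0 < σ := lt_trans (by positivity) har
  have h10 : a ^ 2 * (σ + β * r / 6) ^ 2 ≤ 9 / 4 * σ ^ 2 := by
    have := pow_le_pow_left₀ (by positivity) h9 2
    linarith
  have h11 : a * r * (a ^ 4 + a ^ 2 * (σ + β * r / 6) ^ 2) ≤ σ * (a ^ 4 + 9 / 4 * σ ^ 2) := by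
    gcongr
  have h12 : a ^ 3 * (σ * (2 * a - k)) < a ^ 3 * (r * (a ^ 2 + (σ + β * r / 6) ^ 2)) := by
    gcongr
  have h13 : σ * (9 / 4 * σ ^ 2 + k * a ^ 3) ≤ σ * a ^ 4 := by gcongr
  linarith

lemma ebx_num1 {b : ℝ} (h0 : 0 ≤ b) (h1 : b ≤ 1) {σ : ℝ} (hσ : σ ^ 2 ≤ b * (1 - b)) :
    9 / 4 * σ ^ 2 + (4 / 3 * max b (1 - b)) * (3 / 2 - b / 6) ^ 3 ≤ (3 / 2 - b / 6) ^ 4 := by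
  set a := 3 / 2 - b / 6 with ha
  rcases le_total b (1 - b) with h | h
  · rw [max_eq_right h]
    have h3 : (2 : ℝ) ≤ a ^ 3 := by
      have : (4 / 3 : ℝ) ^ 3 ≤ a ^ 3 := by gcongr; linarith
      norm_num at this; linarith
    have : 2 * (1 / 6 + 7 / 6 * b) ≤ a ^ 3 * (1 / 6 + 7 / 6 * b) := by gcongr
    have e : a ^ 4 - 4 / 3 * (1 - b) * a ^ 3 = a ^ 3 * (1 / 6 + 7 / 6 * b) := by
      rw [ha]; ring
    nlinarith [sq_nonneg (b - 1 / 4)]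
  · rw [max_eq_left h]
    have h3 : (2 : ℝ) ≤ a ^ 3 := by
      have : (4 / 3 : ℝ) ^ 3 ≤ a ^ 3 := by gcongr; linarith
      norm_num at this; linarith
    have : 2 * (3 / 2 * (1 - b)) ≤ a ^ 3 * (3 / 2 * (1 - b)) := by
      apply mul_le_mul_of_nonneg_right h3; linarith
    have e : a ^ 4 - 4 / 3 * b * a ^ 3 = a ^ 3 * (3 / 2 * (1 - b)) := by
      rw [ha]; ring
    nlinarith

lemma ebx_num2 {b : ℝ} (h0 : 0 ≤ b) (h1 : b ≤ 1) {σ : ℝ} (hσ : σ ^ 2 ≤ b * (1 - b)) :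
    9 / 4 * σ ^ 2 + (3 / 2 * max b (1 - b)) * (3 / 2 - 0 / 6) ^ 3 ≤ (3 / 2 - 0 / 6) ^ 4 := by
  rcases le_total b (1 - b) with h | h
  · rw [max_eq_right h]; nlinarith
  · rw [max_eq_left h]; nlinarith

lemma ebx_prob1 {L : ℝ} (h : 9 / 7 * Real.log 2 ≤ L) :
    Real.exp (-L) + Real.exp (-((4 / 3) ^ 2 * L)) ≤ 3 / 2 * Real.exp (-L) := by
  have : Real.exp (-((4 / 3) ^ 2 * L)) ≤ Real.exp (-L + -Real.log 2) := by
    apply Real.exp_le_exp.2; linarith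
  rw [Real.exp_add, Real.exp_neg (Real.log 2), Real.exp_log (by norm_num)] at this
  linarith

lemma ebx_prob2 {L : ℝ} (h1 : Real.log (3 / 2) ≤ L) (h : L ≤ 9 / 7 * Real.log 2) :
    1 / (1 + 2 * L) + Real.exp (-((3 / 2) ^ 2 * L)) ≤ 3 / 2 * Real.exp (-L) := by
  have hl2 := Real.log_two_gt_d9
  set y := Real.exp L with hy
  have hy0 : 0 < y := Real.exp_pos L
  have hyl : 3 / 2 ≤ y := by
    rw [← Real.exp_log (show (0 : ℝ) < 3 / 2 by norm_num)]
    exact Real.exp_le_exp.2 h1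
  have hyu : y ≤ 2.44 := by
    have : y ^ 7 ≤ 2.44 ^ 7 := by
      rw [hy, ← Real.exp_nat_mul]
      calc Real.exp ((7 : ℕ) * L) ≤ Real.exp ((9 : ℕ) * Real.log 2) := by
            apply Real.exp_le_exp.2; push_cast; linarith
        _ = 2 ^ 9 := by rw [Real.exp_nat_mul, Real.exp_log (by norm_num)]
        _ ≤ _ := by norm_num
    exact le_of_pow_le_pow_left₀ (by norm_num) (by norm_num) this
  have hL : 1.6931 - 2 / y ≤ L := by
    have := Real.one_sub_inv_le_log_of_pos (show 0 < y / 2 by positivity)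
    rw [Real.log_div hy0.ne' (by norm_num), hy, Real.log_exp, ← hy, inv_div] at this
    linarith
  have hLp : 0 < L := lt_of_lt_of_le (Real.log_pos (by norm_num)) h1
  have hA : y ≤ 0.895 * (1 + 2 * L) := by
    have h3 : y ≤ 0.895 * (1 + 2 * (1.6931 - 2 / y)) := by
      have : 2 / y * y = 2 := by field_simp
      have h4 : 0 ≤ (0.895 * (1 + 2 * (1.6931 - 2 / y)) - y) * y := by
        nlinarith
      nlinarith [nonneg_of_mul_nonneg_left h4 hy0]
    nlinarith
  have hB : Real.exp (-(5 / 4 * L)) ≤ 0.605 := by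
    have : Real.exp (-(5 / 4 * L)) ^ 4 ≤ 0.605 ^ 4 := by
      have e : Real.exp (-(5 / 4 * L)) ^ 4 = (y⁻¹) ^ 5 := by
        rw [hy, ← Real.exp_neg, ← Real.exp_nat_mul, ← Real.exp_nat_mul]
        congr 1; push_cast; ring
      rw [e]
      calc (y⁻¹) ^ 5 ≤ ((3 / 2 : ℝ)⁻¹) ^ 5 := by gcongr
        _ ≤ _ := by norm_num
    exact le_of_pow_le_pow_left₀ (by norm_num) (by norm_num) this
  have e1 : Real.exp (-((3 / 2) ^ 2 * L)) = Real.exp (-(5 / 4 * L)) * Real.exp (-L) := by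
    rw [← Real.exp_add]; congr 1; ring
  have e2 : 1 / (1 + 2 * L) ≤ 0.895 * Real.exp (-L) := by
    rw [Real.exp_neg, ← hy, div_le_iff₀ (by linarith)]
    have : y⁻¹ * y = 1 := by field_simp
    have hyi : 0 < y⁻¹ := by positivity
    nlinarith [mul_le_mul_of_nonneg_left hA hyi.le]
  rw [e1]
  nlinarith [mul_le_mul_of_nonneg_right hB (Real.exp_pos (-L)).le, Real.exp_pos (-L)]

section
variable {Ω : Type*} [MeasurableSpace Ω] {P : Measure Ω} [IsProbabilityMeasure P]

lemma ebx_integrable {h : Ω → ℝ} (hm : Measurable h) (C : ℝ) (hb : ∀ᵐ ω ∂P, |h ω| ≤ C) :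
    Integrable h P :=
  Integrable.of_bound hm.aestronglyMeasurable C (by simpa [Real.norm_eq_abs] using hb)

lemma ebx_chernoff {h : Ω → ℝ} (n : ℕ) (hint : Integrable (fun ω => Real.exp (h ω)) P)
    {κ : ℝ} (hκ : ∫ ω, Real.exp (h ω) ∂P ≤ Real.exp κ) (a : ℝ) :
    (Measure.pi fun _ : Fin n => P).real {d | a ≤ ∑ i, h (d i)} ≤ Real.exp (n * κ - a) := by
  have e : (∫ d : Fin n → Ω, ∏ i, Real.exp (h (d i)) ∂(Measure.pi fun _ : Fin n => P))
      = (∫ ω, Real.exp (h ω) ∂P) ^ n := by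
    have := integral_fintype_prod_eq_pow (ι := Fin n) (μ := P) (fun ω => Real.exp (h ω))
    simpa using this
  have hi : Integrable (fun d : Fin n → Ω => ∏ i, Real.exp (h (d i)))
      (Measure.pi fun _ : Fin n => P) :=
    Integrable.fintype_prod (f := fun _ ω => Real.exp (h ω)) (fun _ => hint)
  have hM := mul_meas_ge_le_integral_of_nonneg (μ := Measure.pi fun _ : Fin n => P)
    (f := fun d => ∏ i, Real.exp (h (d i)))
    (Filter.Eventually.of_forall fun d => Finset.prod_nonneg fun i _ => (Real.exp_pos _).le)
    hi (Real.exp a)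
  have hs : {d : Fin n → Ω | Real.exp a ≤ ∏ i, Real.exp (h (d i))}
      = {d | a ≤ ∑ i, h (d i)} := by
    ext d; simp only [Set.mem_ofPred_eq, ← Real.exp_sum, Real.exp_le_exp]
  rw [hs, e] at hM
  have h2 : (∫ ω, Real.exp (h ω) ∂P) ^ n ≤ Real.exp (n * κ) := by
    rw [Real.exp_nat_mul]
    exact pow_le_pow_left₀ (integral_nonneg fun ω => (Real.exp_pos _).le) hκ n
  rw [Real.exp_sub, le_div_iff₀ (Real.exp_pos a)]
  linarith

lemma ebx_bernstein {ξ : Ω → ℝ} (hm : Measurable ξ) (h1 : ∀ᵐ ω ∂P, |ξ ω| ≤ 1) {b : ℝ}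
    (hb0 : 0 ≤ b) (hb : ∀ᵐ ω ∂P, ξ ω ≤ b) (hmean : ∫ ω, ξ ω ∂P = 0) {s : ℝ} (hs : 0 < s)
    (hvar : ∫ ω, ξ ω ^ 2 ∂P = s ^ 2) {n : ℕ} (hn : 0 < n) {r : ℝ} (hr : 0 < r) :
    (Measure.pi fun _ : Fin n => P).real {d | n * (s * r + b * r ^ 2 / 6) ≤ ∑ i, ξ (d i)}
      ≤ Real.exp (-(n * r ^ 2 / 2)) := by
  set q := r / s with hq
  have hq0 : 0 < q := by positivity
  set B := 1 + b * q / 3 with hB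
  have hB0 : 0 < B := by positivity
  set l := q / B with hl
  have hl0 : 0 < l := by positivity
  have hlb : 1 - l * b / 3 = 1 / B := by
    rw [hl]; field_simp; rw [hB]; ring
  have hB1 : 0 < 1 / B := by positivity
  set κ := l ^ 2 * s ^ 2 / (2 * (1 - l * b / 3)) with hκ
  have i1 : Integrable ξ P := ebx_integrable hm 1 h1
  have i2 : Integrable (fun ω => ξ ω ^ 2) P := ebx_integrable (hm.pow_const 2) 1 (by
    filter_upwards [h1] with ω h
    rw [abs_pow]; exact pow_le_one₀ (abs_nonneg _) h)
  have i3 : Integrable (fun ω => Real.exp (l * ξ ω)) P :=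
    ebx_integrable (by fun_prop) (Real.exp l) (by
      filter_upwards [h1] with ω h
      rw [abs_of_pos (Real.exp_pos _), Real.exp_le_exp]
      nlinarith [le_abs_self (ξ ω)])
  have hmgf : ∫ ω, Real.exp (l * ξ ω) ∂P ≤ Real.exp κ := by
    calc ∫ ω, Real.exp (l * ξ ω) ∂P
        ≤ ∫ ω, (1 + l * ξ ω + l ^ 2 / (2 * (1 - l * b / 3)) * ξ ω ^ 2) ∂P := by
          apply integral_mono_ae i3
          · exact (((integrable_const _).add (i1.const_mul _)).add (i2.const_mul _))
          · filter_upwards [hb] with ω h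
            have := ebx_exp_le (x := l * ξ ω) (y := l * b) (by gcongr) (by positivity)
              (by linarith)
            refine this.trans (le_of_eq ?_)
            ring
      _ = 1 + κ := by
          have j1 : Integrable (fun ω => 1 + l * ξ ω) P :=
            (integrable_const _).add (i1.const_mul _)
          rw [integral_add j1 (i2.const_mul _),
            integral_add (integrable_const _) (i1.const_mul _), integral_const_mul,
            integral_const_mul, hmean, hvar, hκ]
          simp
          ring
      _ ≤ Real.exp κ := by linarith [Real.add_one_le_exp κ]
  have := ebx_chernoff n i3 hmgf (l * (n * (s * r + b * r ^ 2 / 6)))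
  have hset : {d : Fin n → Ω | n * (s * r + b * r ^ 2 / 6) ≤ ∑ i, ξ (d i)}
      = {d | l * (n * (s * r + b * r ^ 2 / 6)) ≤ ∑ i, l * ξ (d i)} := by
    ext d
    simp only [Set.mem_ofPred_eq, ← Finset.mul_sum]
    exact (mul_le_mul_iff_right₀ hl0).symm
  rw [hset]
  refine this.trans (le_of_eq ?_)
  congr 1
  rw [hκ, hlb]
  have hr' : r = q * s := by rw [hq]; field_simp
  rw [hr', hl]
  field_simp
  rw [hB]; ring

lemma ebx_lower {ξ : Ω → ℝ} (hm : Measurable ξ) {g : ℝ}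
    (hg0 : 0 < g) (hg : ∀ᵐ ω ∂P, |ξ ω| ≤ g) {s : ℝ} (hs : 0 < s)
    (hvar : ∫ ω, ξ ω ^ 2 ∂P = s ^ 2) {n : ℕ} {r : ℝ} (hr : 0 < r) :
    (Measure.pi fun _ : Fin n => P).real {d | ∑ i, ξ (d i) ^ 2 ≤ n * (s ^ 2 - g * s * r)}
      ≤ Real.exp (-(n * r ^ 2 / 2)) := by
  set l := r / (g * s) with hl
  have hl0 : 0 < l := by positivity
  have i2 : Integrable (fun ω => ξ ω ^ 2) P := ebx_integrable (hm.pow_const 2) (g ^ 2) (by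
    filter_upwards [hg] with ω h
    rw [abs_pow]; gcongr)
  have i3 : Integrable (fun ω => Real.exp (-(l * ξ ω ^ 2))) P :=
    ebx_integrable (by fun_prop) 1 (by
      filter_upwards with ω
      rw [abs_of_pos (Real.exp_pos _), Real.exp_le_one_iff, neg_nonpos]
      positivity)
  set κ := (-l + l ^ 2 * g ^ 2 / 2) * s ^ 2 with hκ
  have hmgf : ∫ ω, Real.exp (-(l * ξ ω ^ 2)) ∂P ≤ Real.exp κ := by
    calc ∫ ω, Real.exp (-(l * ξ ω ^ 2)) ∂P
        ≤ ∫ ω, (1 + (-l + l ^ 2 * g ^ 2 / 2) * ξ ω ^ 2) ∂P := by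
          apply integral_mono_ae i3
          · exact (integrable_const _).add (i2.const_mul _)
          · filter_upwards [hg] with ω h
            have := ebx_exp_neg (x := l * ξ ω ^ 2) (by positivity)
            refine this.trans ?_
            have h2 : ξ ω ^ 2 ≤ g ^ 2 := by
              rw [← sq_abs]; gcongr
            have h3 : l ^ 2 * ξ ω ^ 2 * ξ ω ^ 2 ≤ l ^ 2 * ξ ω ^ 2 * g ^ 2 := by gcongr
            linarith
      _ = 1 + κ := by
          rw [integral_add (integrable_const _) (i2.const_mul _), integral_const_mul, hvar, hκ]
          simp
      _ ≤ Real.exp κ := by linarith [Real.add_one_le_exp κ]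
  have := ebx_chernoff n i3 hmgf (-(l * (n * (s ^ 2 - g * s * r))))
  have hset : {d : Fin n → Ω | ∑ i, ξ (d i) ^ 2 ≤ n * (s ^ 2 - g * s * r)}
      = {d | -(l * (n * (s ^ 2 - g * s * r))) ≤ ∑ i, -(l * ξ (d i) ^ 2)} := by
    ext d
    simp only [Set.mem_ofPred_eq, Finset.sum_neg_distrib, ← Finset.mul_sum, neg_le_neg_iff]
    exact (mul_le_mul_iff_right₀ hl0).symm
  rw [hset]
  refine this.trans (le_of_eq ?_)
  congr 1
  have hr' : r = l * (g * s) := by rw [hl]; field_simp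
  rw [hκ, hr']
  ring

lemma ebx_cantelli {ξ : Ω → ℝ} (hm : Measurable ξ) (h1 : ∀ᵐ ω ∂P, |ξ ω| ≤ 1)
    (hmean : ∫ ω, ξ ω ∂P = 0) {s : ℝ} (hs : 0 < s)
    (hvar : ∫ ω, ξ ω ^ 2 ∂P = s ^ 2) {n : ℕ} (hn : 0 < n) {r : ℝ} (hr : 0 < r) :
    (Measure.pi fun _ : Fin n => P).real {d | n * (s * r) ≤ ∑ i, ξ (d i)}
      ≤ 1 / (1 + n * r ^ 2) := by
  set μ := (Measure.pi fun _ : Fin n => P) with hμ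
  have hn' : (0 : ℝ) < n := by exact_mod_cast hn
  have mL : MemLp ξ 2 P := MemLp.of_bound hm.aestronglyMeasurable 1
    (by simpa [Real.norm_eq_abs] using h1)
  have hv := variance_sum_pi (ι := Fin n) (μ := fun _ => P) (X := fun _ => ξ) (fun _ => mL)
  have hvξ : Var[ξ; P] = s ^ 2 := by
    rw [variance_eq_sub mL]
    simp only [Pi.pow_apply]
    rw [hvar, hmean]; ring
  have i1 : Integrable ξ P := ebx_integrable hm 1 h1
  have mLi : ∀ i : Fin n, MemLp (fun d : Fin n → Ω => ξ (d i)) 2 μ := fun i =>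
    mL.comp_measurePreserving (measurePreserving_eval (fun _ : Fin n => P) i)
  have mS : MemLp (fun d : Fin n → Ω => ∑ i, ξ (d i)) 2 μ := memLp_finsetSum _ fun i _ => mLi i
  have iS : Integrable (fun d : Fin n → Ω => ∑ i, ξ (d i)) μ := mS.integrable (by norm_num)
  have eS : ∫ d, ∑ i, ξ (d i) ∂μ = 0 := by
    rw [integral_finsetSum _ fun i _ => (mLi i).integrable (by norm_num)]
    apply Finset.sum_eq_zero
    intro i _
    rw [hμ, integral_comp_eval (μ := fun _ : Fin n => P) (f := ξ) hm.aestronglyMeasurable, hmean]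
  have eS2 : ∫ d, (∑ i, ξ (d i)) ^ 2 ∂μ = n * s ^ 2 := by
    have e : (∑ i : Fin n, fun ω : Fin n → Ω => ξ (ω i)) = fun d => ∑ i, ξ (d i) := by
      ext d; simp
    rw [e, ← hμ, variance_eq_sub mS, eS] at hv
    simp only [Pi.pow_apply, hvξ] at hv
    simpa using hv
  set a := s / r with ha
  have ha0 : 0 < a := by positivity
  have iS2 : Integrable (fun d : Fin n → Ω => (∑ i, ξ (d i)) ^ 2) μ := mS.integrable_sq
  have i4 : Integrable (fun d : Fin n → Ω => (∑ i, ξ (d i)) ^ 2 + 2 * a * (∑ i, ξ (d i)) + a ^ 2) μ :=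
    (iS2.add (iS.const_mul _)).add (integrable_const _)
  have eI : ∫ d, ((∑ i, ξ (d i)) ^ 2 + 2 * a * (∑ i, ξ (d i)) + a ^ 2) ∂μ = n * s ^ 2 + a ^ 2 := by
    have j1 : Integrable (fun d : Fin n → Ω => (∑ i, ξ (d i)) ^ 2 + 2 * a * (∑ i, ξ (d i))) μ :=
      iS2.add (iS.const_mul _)
    rw [integral_add j1 (integrable_const _),
      integral_add iS2 (iS.const_mul _), integral_const_mul, eS, eS2]
    simp
  have hM := mul_meas_ge_le_integral_of_nonneg (μ := μ)
    (f := fun d => (∑ i, ξ (d i)) ^ 2 + 2 * a * (∑ i, ξ (d i)) + a ^ 2)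
    (Filter.Eventually.of_forall fun d => by
      simp only [Pi.zero_apply]
      nlinarith [sq_nonneg ((∑ i, ξ (d i)) + a)])
    i4 ((n * (s * r) + a) ^ 2)
  rw [eI] at hM
  have hsub : μ.real {d | n * (s * r) ≤ ∑ i, ξ (d i)} ≤ μ.real {d |
      (n * (s * r) + a) ^ 2 ≤ (∑ i, ξ (d i)) ^ 2 + 2 * a * (∑ i, ξ (d i)) + a ^ 2} := by
    refine measureReal_mono ?_ (measure_ne_top _ _)
    intro d hd
    simp only [Set.mem_ofPred_eq] at hd ⊢
    have := pow_le_pow_left₀ (by positivity) (add_le_add_left hd a) 2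
    nlinarith
  refine hsub.trans ?_
  rw [← le_div_iff₀' (by positivity)] at hM
  refine hM.trans (le_of_eq ?_)
  rw [ha]
  field_simp
  ring

end

section
variable {Ω : Type*} [MeasurableSpace Ω] {P : Measure Ω} [IsProbabilityMeasure P]

lemma ebx_var_id {n : ℕ} (hn : 0 < n) (x : Fin n → ℝ) (m : ℝ) :
    (1 / (n : ℝ)) * ∑ i, (x i - (1 / (n : ℝ)) * ∑ i, x i) ^ 2
      = (1 / (n : ℝ)) * ∑ i, (x i - m) ^ 2 - ((1 / (n : ℝ)) * ∑ i, (x i - m)) ^ 2 := by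
  have hn' : (n : ℝ) ≠ 0 := by positivity
  set M := (1 / (n : ℝ)) * ∑ i, x i with hM
  have hs : ∑ i, x i = n * M := by rw [hM]; field_simp
  have e1 : ∑ i, (x i - M) ^ 2 = ∑ i, x i ^ 2 - n * M ^ 2 := by
    have : ∀ i, (x i - M) ^ 2 = x i ^ 2 - 2 * M * x i + M ^ 2 := fun i => by ring
    simp only [this, Finset.sum_add_distrib, Finset.sum_sub_distrib, ← Finset.mul_sum, hs]
    simp; ring
  have e2 : ∑ i, (x i - m) ^ 2 = ∑ i, x i ^ 2 - 2 * m * (n * M) + n * m ^ 2 := by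
    have : ∀ i, (x i - m) ^ 2 = x i ^ 2 - 2 * m * x i + m ^ 2 := fun i => by ring
    simp only [this, Finset.sum_add_distrib, Finset.sum_sub_distrib, ← Finset.mul_sum, hs]
    simp
  have e3 : ∑ i, (x i - m) = n * M - n * m := by
    simp only [Finset.sum_sub_distrib, hs]; simp
  rw [e1, e2, e3]
  field_simp
  ring

lemma ebx_ded {n : ℕ} (hn : 0 < n) (x : Fin n → ℝ) (m : ℝ) {s L β k : ℝ} (hL : 0 < L)
    (hβ0 : 0 ≤ β) (hβ1 : β ≤ 1) (hs : 0 ≤ s) (hk : 0 ≤ k)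
    (hcond : 9 / 4 * s ^ 2 + k * (3 / 2 - β / 6) ^ 3 ≤ (3 / 2 - β / 6) ^ 4)
    (hS : ∑ i, (x i - m) ≤ n * (s * Real.sqrt (2 * L / n) + β * Real.sqrt (2 * L / n) ^ 2 / 6))
    (hV : n * (s ^ 2 - k * s * Real.sqrt (2 * L / n)) ≤ ∑ i, (x i - m) ^ 2) :
    (1 / (n : ℝ)) * ∑ i, x i -
      (Real.sqrt ((1 / (n : ℝ)) * ∑ i, (x i - (1 / (n : ℝ)) * ∑ i, x i) ^ 2)
        * Real.sqrt (2 * L / n) + 3 * L / n) ≤ m := by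
  have hn' : (0 : ℝ) < n := by positivity
  have hr : 0 < Real.sqrt (2 * L / n) := Real.sqrt_pos.2 (by positivity)
  have hrr : Real.sqrt (2 * L / n) ^ 2 = 2 * L / n := Real.sq_sqrt (by positivity)
  have hid := ebx_var_id hn x m
  have h := ebx_det (D := (1 / (n : ℝ)) * ∑ i, (x i - m)) (V := (1 / (n : ℝ)) * ∑ i, (x i - m) ^ 2)
    hβ0 hβ1 hr hs hk hcond
    (by rw [one_div, inv_mul_le_iff₀ hn']; exact hS)
    (by rw [one_div, le_inv_mul_iff₀ hn']; exact hV)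
    (by rw [← hid]; positivity)
  rw [← hid, hrr] at h
  have e3 : (1 / (n : ℝ)) * ∑ i, (x i - m) = (1 / (n : ℝ)) * ∑ i, x i - m := by
    simp only [Finset.sum_sub_distrib]; simp; field_simp
  rw [e3] at h
  have e4 : 3 * (2 * L / n) / 2 = 3 * L / (n : ℝ) := by ring
  rw [e4] at h
  linarith

lemma ebx_main {f : Ω → ℝ} (hm : Measurable f) (hf : ∀ᵐ ω ∂P, f ω ∈ Set.Icc (0 : ℝ) 1)
    {n : ℕ} (hn : 0 < n) {L : ℝ} (hL : Real.log (3 / 2) ≤ L) :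
    (Measure.pi fun _ : Fin n => P).real {d | ∫ ω, f ω ∂P <
      (1 / (n : ℝ)) * ∑ i, f (d i) -
      (Real.sqrt ((1 / (n : ℝ)) * ∑ i, (f (d i) - (1 / (n : ℝ)) * ∑ i, f (d i)) ^ 2)
        * Real.sqrt (2 * L / n) + 3 * L / n)} ≤ 3 / 2 * Real.exp (-L) := by
  have hL0 : 0 < L := lt_of_lt_of_le (Real.log_pos (by norm_num)) hL
  have hn' : (0 : ℝ) < n := by positivity
  set m := ∫ ω, f ω ∂P with hmdef
  set r := Real.sqrt (2 * L / n) with hrdef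
  have hr : 0 < r := Real.sqrt_pos.2 (by positivity)
  have hrr : r ^ 2 = 2 * L / n := Real.sq_sqrt (by positivity)
  have hif : Integrable f P := ebx_integrable hm 1 (by
    filter_upwards [hf] with ω h
    rw [abs_of_nonneg h.1]; exact h.2)
  have hm0 : 0 ≤ m := integral_nonneg_of_ae (by filter_upwards [hf] with ω h using h.1)
  have hm1 : m ≤ 1 := by
    have := integral_mono_ae hif (integrable_const (1 : ℝ))
      (by filter_upwards [hf] with ω h using h.2)
    simpa using this
  set b := 1 - m with hb
  set g := max b (1 - b) with hg
  have hg0 : 0 < g := by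
    rcases le_total b (1 - b) with h | h
    · exact lt_of_lt_of_le (by linarith) (le_max_right _ _)
    · exact lt_of_lt_of_le (by linarith) (le_max_left _ _)
  set ξ : Ω → ℝ := fun ω => f ω - m with hξ
  have hξm : Measurable ξ := hm.sub_const m
  have hξb : ∀ᵐ ω ∂P, ξ ω ≤ b := by
    filter_upwards [hf] with ω h
    have := h.2
    simp only [hξ, hb]; linarith
  have hξg : ∀ᵐ ω ∂P, |ξ ω| ≤ g := by
    filter_upwards [hf] with ω h
    have h1 := h.2
    have h0 := h.1
    have a1 := le_max_left b (1 - b)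
    have a2 := le_max_right b (1 - b)
    rw [abs_le]
    simp only [hξ]; constructor <;> linarith
  have hξ1 : ∀ᵐ ω ∂P, |ξ ω| ≤ 1 := by
    filter_upwards [hξg] with ω h
    exact h.trans (max_le (by linarith) (by linarith))
  have hmean : ∫ ω, ξ ω ∂P = 0 := by
    simp only [hξ]
    rw [integral_sub hif (integrable_const _)]
    simp [← hmdef]
  set s := Real.sqrt (∫ ω, ξ ω ^ 2 ∂P) with hs
  have hv0 : 0 ≤ ∫ ω, ξ ω ^ 2 ∂P := integral_nonneg fun ω => sq_nonneg _
  have hvar : ∫ ω, ξ ω ^ 2 ∂P = s ^ 2 := (Real.sq_sqrt hv0).symm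
  have i2 : Integrable (fun ω => ξ ω ^ 2) P := ebx_integrable (hξm.pow_const 2) 1 (by
    filter_upwards [hξ1] with ω h
    rw [abs_pow]; exact pow_le_one₀ (abs_nonneg _) h)
  have hsb : s ^ 2 ≤ b * (1 - b) := by
    rw [← hvar]
    have : ∫ ω, ξ ω ^ 2 ∂P ≤ ∫ ω, ((1 - 2 * m) * f ω + m ^ 2) ∂P := by
      apply integral_mono_ae i2
      · exact (hif.const_mul _).add (integrable_const _)
      · filter_upwards [hf] with ω h
        have h1 := h.2
        have h0 := h.1
        simp only [hξ]
        nlinarith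
    rw [integral_add (hif.const_mul _) (integrable_const _), integral_const_mul, ← hmdef] at this
    simp at this
    rw [hb]; nlinarith
  set μ := (Measure.pi fun _ : Fin n => P) with hμ
  rcases eq_or_lt_of_le (Real.sqrt_nonneg (∫ ω, ξ ω ^ 2 ∂P)) with hs0 | hs0
  · rw [← hs] at hs0
    have hz : ∀ᵐ ω ∂P, ξ ω = 0 := by
      rw [← hs0] at hvar
      have := (integral_eq_zero_iff_of_nonneg (fun ω => sq_nonneg (ξ ω)) i2).1 (by simpa using hvar)
      filter_upwards [this] with ω h
      simpa using h
    have hz2 : ∀ᵐ d ∂μ, ∀ i, ξ (d i) = 0 :=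
      Filter.eventually_all.2 fun i => (Measure.tendsto_eval_ae_ae (μ := fun _ : Fin n => P)).eventually hz
    have : μ.real {d | m <
        (1 / (n : ℝ)) * ∑ i, f (d i) -
        (Real.sqrt ((1 / (n : ℝ)) * ∑ i, (f (d i) - (1 / (n : ℝ)) * ∑ i, f (d i)) ^ 2)
          * r + 3 * L / n)} = 0 := by
      rw [measureReal_eq_zero_iff]
      refine measure_mono_null ?_ (ae_iff.1 hz2)
      intro d hd
      simp only [Set.mem_ofPred_eq] at hd ⊢
      intro hall
      have h0 : ∀ i, f (d i) - m = 0 := hall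
      have := ebx_ded hn (fun i => f (d i)) m (s := 0) (β := 0) (k := 0) hL0 le_rfl (by norm_num)
        le_rfl le_rfl (by norm_num) (by simp [h0]) (by simp [h0])
      exact absurd this (not_le.2 hd)
    rw [this]
    positivity
  rw [← hs] at hs0
  rcases le_total (9 / 7 * Real.log 2) L with hc | hc
  · refine le_trans ?_ (ebx_prob1 hc)
    have hA := ebx_bernstein hξm hξ1 (b := b) (by linarith) hξb hmean hs0 hvar hn hr
    have hB := ebx_lower hξm hg0 hξg hs0 hvar (n := n) (r := 4 / 3 * r) (by positivity)
    have eA : (n : ℝ) * r ^ 2 / 2 = L := by rw [hrr]; field_simp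
    have eB : (n : ℝ) * (4 / 3 * r) ^ 2 / 2 = (4 / 3) ^ 2 * L := by rw [← eA]; ring
    rw [eA] at hA
    rw [eB] at hB
    refine le_trans ?_ (add_le_add hA hB)
    refine le_trans (measureReal_mono ?_ (measure_ne_top _ _)) (measureReal_union_le _ _)
    intro d hd
    simp only [Set.mem_union, Set.mem_ofPred_eq] at hd ⊢
    by_contra! hcon
    have := ebx_ded hn (fun i => f (d i)) m (s := s) (β := b) (k := 4 / 3 * g) hL0 (by linarith)
      (by linarith) hs0.le (by positivity) (ebx_num1 (by linarith) (by linarith) hsb)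
      hcon.1.le (by
        refine le_trans (le_of_eq ?_) hcon.2.le
        ring)
    exact absurd this (not_le.2 hd)
  · refine le_trans ?_ (ebx_prob2 hL hc)
    have hA := ebx_cantelli hξm hξ1 hmean hs0 hvar hn hr
    have hB := ebx_lower hξm hg0 hξg hs0 hvar (n := n) (r := 3 / 2 * r) (by positivity)
    have eA : (n : ℝ) * r ^ 2 = 2 * L := by rw [hrr]; field_simp
    have eB : (n : ℝ) * (3 / 2 * r) ^ 2 / 2 = (3 / 2) ^ 2 * L := by
      linear_combination (9 / 8 : ℝ) * eA
    rw [eA] at hA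
    rw [eB] at hB
    refine le_trans ?_ (add_le_add hA hB)
    refine le_trans (measureReal_mono ?_ (measure_ne_top _ _)) (measureReal_union_le _ _)
    intro d hd
    simp only [Set.mem_union, Set.mem_ofPred_eq] at hd ⊢
    by_contra! hcon
    have := ebx_ded hn (fun i => f (d i)) m (s := s) (β := 0) (k := 3 / 2 * g) hL0 le_rfl
      (by norm_num) hs0.le (by positivity) (ebx_num2 (by linarith) (by linarith) hsb)
      (by
        refine le_trans hcon.1.le (le_of_eq ?_)
        ring) (by
        refine le_trans (le_of_eq ?_) hcon.2.le
        ring)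
    exact absurd this (not_le.2 hd)

lemma ebx_affine {X : Ω → ℝ} (hm : Measurable X) {lo R : ℝ} (hR : 0 < R)
    (hX : ∀ᵐ ω ∂P, lo ≤ X ω ∧ X ω ≤ lo + R)
    {n : ℕ} (hn : 0 < n) {L : ℝ} (hL : Real.log (3 / 2) ≤ L) :
    (Measure.pi fun _ : Fin n => P).real {d | ∫ ω, X ω ∂P <
      (1 / (n : ℝ)) * ∑ i, X (d i) -
      (Real.sqrt ((1 / (n : ℝ)) * ∑ i, (X (d i) - (1 / (n : ℝ)) * ∑ i, X (d i)) ^ 2)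
        * Real.sqrt (2 * L / n) + 3 * R * L / n)} ≤ 3 / 2 * Real.exp (-L) := by
  have hn' : (0 : ℝ) < n := by positivity
  have hXi : Integrable X P := ebx_integrable hm (|lo| + R) (by
    filter_upwards [hX] with ω h
    rw [abs_le]
    constructor
    · linarith [neg_abs_le lo]
    · linarith [le_abs_self lo])
  have h := ebx_main (P := P) (f := fun ω => (X ω - lo) / R) (by fun_prop) (by
    filter_upwards [hX] with ω h
    refine ⟨div_nonneg (by linarith) hR.le, ?_⟩
    rw [div_le_one hR]; linarith) hn hL
  refine le_trans (le_of_eq ?_) h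
  congr 1
  ext d
  simp only [Set.mem_ofPred_eq]
  have e1 : ∫ ω, (X ω - lo) / R ∂P = (∫ ω, X ω ∂P - lo) / R := by
    rw [integral_div, integral_sub hXi (integrable_const _)]; simp
  have e2 : (1 / (n : ℝ)) * ∑ i, (X (d i) - lo) / R = ((1 / (n : ℝ)) * ∑ i, X (d i) - lo) / R := by
    rw [← Finset.sum_div, Finset.sum_sub_distrib]; simp; field_simp
  rw [e1, e2]
  set M := (1 / (n : ℝ)) * ∑ i, X (d i)
  have e3 : (1 / (n : ℝ)) * ∑ i, ((X (d i) - lo) / R - (M - lo) / R) ^ 2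
      = ((1 / (n : ℝ)) * ∑ i, (X (d i) - M) ^ 2) / R ^ 2 := by
    rw [mul_div_assoc, Finset.sum_div]
    congr 1
    apply Finset.sum_congr rfl
    intro i _
    field_simp
    ring
  rw [e3, Real.sqrt_div' _ (show 0 ≤ R ^ 2 by positivity), Real.sqrt_sq hR.le, div_lt_iff₀ hR]
  set A := Real.sqrt ((1 / (n : ℝ)) * ∑ i, (X (d i) - M) ^ 2)
  set B := Real.sqrt (2 * L / n)
  have e4 : ((M - lo) / R - (A / R * B + 3 * L / n)) * R = M - lo - (A * B + 3 * R * L / n) := by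
    field_simp
  rw [e4]
  constructor <;> intro h <;> linarith

end

section
variable {𝒳 : Type*} [MeasurableSpace 𝒳] {K dY : ℕ}

lemma ebx_psi_eq (e : Fin K → 𝒳 → ℝ) (π : Fin K → 𝒳 → ℝ) (j : Fin dY)
    (o : 𝒳 × Fin K × (Fin dY → ℝ)) :
    psiIPW K dY e π j o = π o.2.1 o.1 * (o.2.2 j / e o.2.1 o.1) := by
  simp [psiIPW]

lemma ebx_ite_meas (j : Fin dY) (k : Fin K) :
    Measurable (fun o : 𝒳 × Fin K × (Fin dY → ℝ) => if o.2.1 = k then o.2.2 j else 0) := by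
  refine Measurable.ite ?_ ?_ measurable_const
  · exact measurable_snd.fst (measurableSet_singleton k)
  · fun_prop

lemma ebx_psi_alt (e : Fin K → 𝒳 → ℝ) (π : Fin K → 𝒳 → ℝ) (j : Fin dY) :
    psiIPW K dY e π j = fun o : 𝒳 × Fin K × (Fin dY → ℝ) =>
      ∑ k, (π k o.1 / e k o.1) * (if o.2.1 = k then o.2.2 j else 0) := by
  ext o
  unfold psiIPW
  apply Finset.sum_congr rfl
  intro k _
  split_ifs <;> ring

lemma ebx_psi_meas {e : Fin K → 𝒳 → ℝ} {π : Fin K → 𝒳 → ℝ} (j : Fin dY)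
    (he : ∀ k, Measurable (e k)) (hπ : ∀ k, Measurable (π k)) :
    Measurable (psiIPW K dY e π j) := by
  rw [ebx_psi_alt]
  refine Finset.measurable_sum _ fun k _ => ?_
  exact (((hπ k).comp measurable_fst).div ((he k).comp measurable_fst)).mul (ebx_ite_meas j k)

lemma ebx_pi_le_one {π : Fin K → 𝒳 → ℝ} (h0 : ∀ k x, 0 ≤ π k x)
    (hs : ∀ x, ∑ k : Fin K, π k x = 1) (k : Fin K) (x : 𝒳) : π k x ≤ 1 := by
  rw [← hs x]
  exact Finset.single_le_sum (f := fun k => π k x) (fun i _ => h0 i x) (Finset.mem_univ k)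

lemma ebx_psi_bdd {e : Fin K → 𝒳 → ℝ} {π : Fin K → 𝒳 → ℝ} (j : Fin dY) {c : ℝ} (hc : 0 < c)
    (hpos : ∀ k x, c ≤ e k x) (h0 : ∀ k x, 0 ≤ π k x) (hs : ∀ x, ∑ k : Fin K, π k x = 1)
    (o : 𝒳 × Fin K × (Fin dY → ℝ)) (hY : o.2.2 j ∈ Set.Icc (0 : ℝ) 1) :
    0 ≤ psiIPW K dY e π j o ∧ psiIPW K dY e π j o ≤ 1 / c := by
  rw [ebx_psi_eq]
  have he := hpos o.2.1 o.1
  have he0 : 0 < e o.2.1 o.1 := by linarith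
  have hq0 : 0 ≤ o.2.2 j / e o.2.1 o.1 := div_nonneg hY.1 he0.le
  have hq1 : o.2.2 j / e o.2.1 o.1 ≤ 1 / c := by
    apply div_le_div₀ (by norm_num) hY.2 hc he
  have hp0 := h0 o.2.1 o.1
  have hp1 := ebx_pi_le_one h0 hs o.2.1 o.1
  refine ⟨mul_nonneg hp0 hq0, ?_⟩
  nlinarith

lemma ebx_psi_int (Pobs : Measure (𝒳 × Fin K × (Fin dY → ℝ))) [IsProbabilityMeasure Pobs]
    {e : Fin K → 𝒳 → ℝ} {μreg : Fin dY → Fin K → 𝒳 → ℝ}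
    {c : ℝ} (hc : 0 < c)
    (hpos : ∀ k x, c ≤ e k x)
    (hemeas : ∀ k, Measurable (e k))
    (hμmeas : ∀ j k, Measurable (μreg j k))
    (hμbdd : ∀ j k x, μreg j k x ∈ Set.Icc (0 : ℝ) 1)
    (hY : ∀ᵐ o ∂Pobs, ∀ j, o.2.2 j ∈ Set.Icc (0 : ℝ) 1)
    (hcond : ∀ (j : Fin dY) (k : Fin K) (g : 𝒳 → ℝ), Measurable g → (∃ C, ∀ x, |g x| ≤ C) →
      ∫ o, g o.1 * (if o.2.1 = k then o.2.2 j else 0) ∂Pobs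
        = ∫ o, g o.1 * (e k o.1 * μreg j k o.1) ∂Pobs)
    {π : Fin K → 𝒳 → ℝ} (hπ : ∀ k, Measurable (π k)) (h0 : ∀ k x, 0 ≤ π k x)
    (hs : ∀ x, ∑ k : Fin K, π k x = 1) (j : Fin dY) :
    ∫ o, psiIPW K dY e π j o ∂Pobs = ∫ o, ∑ k : Fin K, π k o.1 * μreg j k o.1 ∂Pobs := by
  have hgb : ∀ k x, |π k x / e k x| ≤ 1 / c := fun k x => by
    have he := hpos k x
    rw [abs_of_nonneg (div_nonneg (h0 k x) (by linarith))]
    exact div_le_div₀ (by norm_num) (ebx_pi_le_one h0 hs k x) hc he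
  rw [ebx_psi_alt]
  rw [integral_finsetSum, integral_finsetSum]
  · apply Finset.sum_congr rfl
    intro k _
    have := hcond j k (fun x => π k x / e k x) ((hπ k).div (hemeas k)) ⟨1 / c, hgb k⟩
    rw [this]
    congr 1
    ext o
    have : e k o.1 ≠ 0 := by linarith [hpos k o.1]
    field_simp
  · intro k _
    refine ebx_integrable (((hπ k).comp measurable_fst).mul ((hμmeas j k).comp measurable_fst)) 1 ?_
    filter_upwards with o
    rw [abs_mul, abs_of_nonneg (h0 k o.1), abs_of_nonneg (hμbdd j k o.1).1]
    exact mul_le_one₀ (ebx_pi_le_one h0 hs k o.1) (hμbdd j k o.1).1 (hμbdd j k o.1).2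
  · intro k _
    refine ebx_integrable ((((hπ k).comp measurable_fst).div
      ((hemeas k).comp measurable_fst)).mul (ebx_ite_meas j k)) (1 / c) ?_
    filter_upwards [hY] with o hYo
    rw [abs_mul]
    have h1 : |if o.2.1 = k then o.2.2 j else 0| ≤ 1 := by
      split_ifs
      · rw [abs_of_nonneg (hYo j).1]; exact (hYo j).2
      · simp
    have := hgb k o.1
    nlinarith [abs_nonneg (if o.2.1 = k then o.2.2 j else 0), abs_nonneg (π k o.1 / e k o.1)]

lemma ebx_Dhat_eq {n : ℕ} (e : Fin K → 𝒳 → ℝ) (π π₀ : Fin K → 𝒳 → ℝ) (j : Fin dY) (w : ℝ)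
    (d : Fin n → 𝒳 × Fin K × (Fin dY → ℝ)) :
    DhatIPW K dY n e π π₀ j w d = (1 / (n : ℝ)) *
      ∑ i, (psiIPW K dY e π j (d i) - (1 + w) * psiIPW K dY e π₀ j (d i)) := by
  unfold DhatIPW VhatIPW
  rw [Finset.sum_sub_distrib, ← Finset.mul_sum]
  ring

end

/-- **Joint finite-sample lower confidence bounds** (Lemma 1 / Statement 3).
Let `Π̃ = {Pi p}_{p : ι}` be a fixed finite set of policies, `π₀` a baseline policy,
`𝒮` the guardrail outcomes and `w_j ∈ [−1,0]`.  Then, under strict positivity, for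
every sample size `n`, with `n` i.i.d. observations,
`P(∃ π ∈ Π̃, j ∈ 𝒮 : V_j(π) − (1+w_j) V_j(π₀) < Ĉ_j^{IPW}(π, α)) ≤ α`. -/
theorem ipw_joint_finite_sample_lower_bounds
    {𝒳 : Type*} [MeasurableSpace 𝒳] (K dY : ℕ) (hK : 0 < K)
    (Pobs : Measure (𝒳 × Fin K × (Fin dY → ℝ))) [IsProbabilityMeasure Pobs]
    (e : Fin K → 𝒳 → ℝ) (μreg : Fin dY → Fin K → 𝒳 → ℝ)
    (c : ℝ) (hc : c ∈ Set.Ioo (0 : ℝ) 1)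
    (hpos : ∀ k x, c ≤ e k x)
    (hemeas : ∀ k, Measurable (e k))
    (hμmeas : ∀ j k, Measurable (μreg j k))
    (hμbdd : ∀ j k x, μreg j k x ∈ Set.Icc (0 : ℝ) 1)
    (hY : ∀ᵐ o ∂Pobs, ∀ j, o.2.2 j ∈ Set.Icc (0 : ℝ) 1)
    (hcond : ∀ (j : Fin dY) (k : Fin K) (g : 𝒳 → ℝ), Measurable g → (∃ C, ∀ x, |g x| ≤ C) →
      ∫ o, g o.1 * (if o.2.1 = k then o.2.2 j else 0) ∂Pobs
        = ∫ o, g o.1 * (e k o.1 * μreg j k o.1) ∂Pobs)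
    -- the fixed finite policy class Π̃ and the baseline π₀
    {ι : Type*} [Fintype ι] [Nonempty ι] (Pi : ι → Fin K → 𝒳 → ℝ)
    (π₀ : Fin K → 𝒳 → ℝ)
    (hPimeas : ∀ p k, Measurable (Pi p k)) (hπ₀meas : ∀ k, Measurable (π₀ k))
    (hPinonneg : ∀ p k x, 0 ≤ Pi p k x) (hPisum : ∀ p x, ∑ k : Fin K, Pi p k x = 1)
    (hπ₀nonneg : ∀ k x, 0 ≤ π₀ k x) (hπ₀sum : ∀ x, ∑ k : Fin K, π₀ k x = 1)
    -- guardrail outcomes and weights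
    (𝒮 : Finset (Fin dY)) (h𝒮 : 𝒮.Nonempty)
    (w : Fin dY → ℝ) (hw : ∀ j ∈ 𝒮, w j ∈ Set.Icc (-1 : ℝ) 0)
    (α : ℝ) (hα : α ∈ Set.Ioo (0 : ℝ) 1)
    -- the true policy values
    (V : Fin dY → (Fin K → 𝒳 → ℝ) → ℝ)
    (hV : ∀ j π, V j π = ∫ o, ∑ k : Fin K, π k o.1 * μreg j k o.1 ∂Pobs)
    (n : ℕ) (hn : 0 < n) :
    ((Measure.pi fun _ : Fin n => Pobs)
      {d | ∃ p : ι, ∃ j ∈ 𝒮,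
        V j (Pi p) - (1 + w j) * V j π₀
          < ChatIPW K dY n e (Pi p) π₀ j (w j) c α (Fintype.card ι) 𝒮.card d}).toReal
      ≤ α := by
  have hc0 : 0 < c := hc.1
  set N : ℝ := (Fintype.card ι : ℝ) * (𝒮.card : ℝ) with hN
  have hT : (1 : ℝ) ≤ (Fintype.card ι : ℝ) := by exact_mod_cast Fintype.card_pos
  have hS : (1 : ℝ) ≤ (𝒮.card : ℝ) := by exact_mod_cast h𝒮.card_pos
  have hN1 : 1 ≤ N := by rw [hN]; nlinarith
  have hα0 := hα.1
  have hα1 := hα.2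
  set L := Real.log (3 * (Fintype.card ι : ℝ) * (𝒮.card : ℝ) / (2 * α)) with hLdef
  have hq : 3 * (Fintype.card ι : ℝ) * (𝒮.card : ℝ) / (2 * α) = 3 * N / (2 * α) := by
    rw [hN]; ring
  have hL : Real.log (3 / 2) ≤ L := by
    rw [hLdef, hq]
    apply Real.log_le_log (by norm_num)
    rw [div_le_div_iff₀ (by norm_num) (by positivity)]
    nlinarith
  have hexp : 3 / 2 * Real.exp (-L) = α / N := by
    rw [Real.exp_neg, hLdef, hq, Real.exp_log (by positivity)]
    field_simp
  have hone : ∀ p : ι, ∀ j ∈ 𝒮, (Measure.pi fun _ : Fin n => Pobs).real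
      {d | V j (Pi p) - (1 + w j) * V j π₀
          < ChatIPW K dY n e (Pi p) π₀ j (w j) c α (Fintype.card ι) 𝒮.card d} ≤ α / N := by
    intro p j hj
    have hw1 := (hw j hj).1
    have hw0 := (hw j hj).2
    have m1 := ebx_psi_meas (dY := dY) j hemeas (hPimeas p)
    have m0 := ebx_psi_meas (dY := dY) j hemeas hπ₀meas
    have b1 : ∀ᵐ o ∂Pobs, 0 ≤ psiIPW K dY e (Pi p) j o ∧ psiIPW K dY e (Pi p) j o ≤ 1 / c := by
      filter_upwards [hY] with o ho
      exact ebx_psi_bdd j hc0 hpos (hPinonneg p) (hPisum p) o (ho j)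
    have b0 : ∀ᵐ o ∂Pobs, 0 ≤ psiIPW K dY e π₀ j o ∧ psiIPW K dY e π₀ j o ≤ 1 / c := by
      filter_upwards [hY] with o ho
      exact ebx_psi_bdd j hc0 hpos hπ₀nonneg hπ₀sum o (ho j)
    have i1 : Integrable (psiIPW K dY e (Pi p) j) Pobs := ebx_integrable m1 (1 / c) (by
      filter_upwards [b1] with o h
      rw [abs_of_nonneg h.1]; exact h.2)
    have i0 : Integrable (psiIPW K dY e π₀ j) Pobs := ebx_integrable m0 (1 / c) (by
      filter_upwards [b0] with o h
      rw [abs_of_nonneg h.1]; exact h.2)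
    have hE : ∫ o, (psiIPW K dY e (Pi p) j o - (1 + w j) * psiIPW K dY e π₀ j o) ∂Pobs
        = V j (Pi p) - (1 + w j) * V j π₀ := by
      rw [integral_sub i1 (i0.const_mul _), integral_const_mul, hV, hV,
        ebx_psi_int Pobs hc0 hpos hemeas hμmeas hμbdd hY hcond (hPimeas p) (hPinonneg p)
          (hPisum p) j,
        ebx_psi_int Pobs hc0 hpos hemeas hμmeas hμbdd hY hcond hπ₀meas hπ₀nonneg hπ₀sum j]
    have h := ebx_affine (P := Pobs)
      (X := fun o => psiIPW K dY e (Pi p) j o - (1 + w j) * psiIPW K dY e π₀ j o)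
      (m1.sub (m0.const_mul _)) (lo := -((1 + w j) / c)) (R := (2 + w j) / c)
      (div_pos (by linarith) hc0) (by
        filter_upwards [b1, b0] with o h1 h0
        have hh : (1 + w j) * psiIPW K dY e π₀ j o ≤ (1 + w j) * (1 / c) :=
          mul_le_mul_of_nonneg_left h0.2 (by linarith)
        have hh0 : 0 ≤ (1 + w j) * psiIPW K dY e π₀ j o :=
          mul_nonneg (by linarith) h0.1
        have e1 : (1 + w j) * (1 / c) = (1 + w j) / c := by ring
        have e2 : -((1 + w j) / c) + (2 + w j) / c = 1 / c := by ring
        rw [e2]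
        rw [e1] at hh
        constructor <;> linarith [h1.1, h1.2]) hn hL
    rw [hE, hexp] at h
    refine le_trans (le_of_eq ?_) h
    congr 1
    ext d
    simp only [Set.mem_ofPred_eq, ChatIPW, sigmahatSqIPW, ebx_Dhat_eq, hLdef]
  have hset : {d : Fin n → 𝒳 × Fin K × (Fin dY → ℝ) | ∃ p : ι, ∃ j ∈ 𝒮,
        V j (Pi p) - (1 + w j) * V j π₀
          < ChatIPW K dY n e (Pi p) π₀ j (w j) c α (Fintype.card ι) 𝒮.card d}
      = ⋃ q ∈ (Finset.univ ×ˢ 𝒮 : Finset (ι × Fin dY)),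
        {d | V q.2 (Pi q.1) - (1 + w q.2) * V q.2 π₀
          < ChatIPW K dY n e (Pi q.1) π₀ q.2 (w q.2) c α (Fintype.card ι) 𝒮.card d} := by
    ext d
    simp only [Set.mem_ofPred_eq, Set.mem_iUnion, Finset.mem_product, Finset.mem_univ, true_and,
      exists_prop, Prod.exists]
  rw [hset]
  change (Measure.pi fun _ : Fin n => Pobs).real _ ≤ α
  refine (measureReal_biUnion_finset_le _ _).trans ?_
  refine (Finset.sum_le_card_nsmul _ _ (α / N) fun q hq => ?_).trans ?_
  · exact hone q.1 q.2 (Finset.mem_product.1 hq).2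
  · rw [Finset.card_product, Finset.card_univ, nsmul_eq_mul]
    push_cast
    rw [← hN]
    apply le_of_eq
    field_simp
end

section
/- Under strict positivity with truth propensity e, for any measurable outcome-regression function m : [K] × 𝒳 → [0,1]^{d_Y} (not necessarily equal to the true conditional mean μ), the doubly-robust score is unbiased for the policy value: E_P[ψ_j^{DR}(O, π; m, e)] = V_j(π) for every policy π and every outcome index j. -/
set_option autoImplicit false

open MeasureTheory ProbabilityTheory

/-- The doubly-robust score
`ψ_j^{DR}(o, π; m, e) = Σ_k π(k,X) (1[A=k](Y_j − m_j(k,X))/e(k,X) + m_j(k,X))`. -/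
noncomputable def psiDR {𝒳 : Type*} (K dY : ℕ)
    (e : Fin K → 𝒳 → ℝ) (m : Fin dY → Fin K → 𝒳 → ℝ)
    (π : Fin K → 𝒳 → ℝ) (j : Fin dY)
    (o : 𝒳 × Fin K × (Fin dY → ℝ)) : ℝ :=
  ∑ k : Fin K, π k o.1 *
    ((if o.2.1 = k then (o.2.2 j - m j k o.1) / e k o.1 else 0) + m j k o.1)

/-- **Unbiasedness (double robustness in the regression) of the DR score**
(Statement 4).  Under strict positivity with the true propensity `e`, for any
measurable outcome-regression `m : [K] × 𝒳 → [0,1]^{d_Y}` (not necessarily equal to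
the true conditional mean `μ`), `E_P[ψ_j^{DR}(O, π; m, e)] = V_j(π)` for every policy
`π` and outcome `j`.  Being the true propensity / conditional mean is encoded by the
integral identities `hcond` and `hprop` against bounded measurable functions of the
covariates. -/
theorem dr_score_unbiased
    {𝒳 : Type*} [MeasurableSpace 𝒳] (K dY : ℕ) (hK : 0 < K)
    (Pobs : Measure (𝒳 × Fin K × (Fin dY → ℝ))) [IsProbabilityMeasure Pobs]
    (e : Fin K → 𝒳 → ℝ) (μreg : Fin dY → Fin K → 𝒳 → ℝ)
    (c : ℝ) (hc : c ∈ Set.Ioo (0 : ℝ) 1)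
    (hpos : ∀ k x, c ≤ e k x)
    (hemeas : ∀ k, Measurable (e k))
    (hμmeas : ∀ j k, Measurable (μreg j k))
    (hμbdd : ∀ j k x, μreg j k x ∈ Set.Icc (0 : ℝ) 1)
    (hY : ∀ᵐ o ∂Pobs, ∀ j, o.2.2 j ∈ Set.Icc (0 : ℝ) 1)
    -- `μreg` is the true conditional mean of `Y` given `(A,X)`
    (hcond : ∀ (j : Fin dY) (k : Fin K) (g : 𝒳 → ℝ), Measurable g → (∃ C, ∀ x, |g x| ≤ C) →
      ∫ o, g o.1 * (if o.2.1 = k then o.2.2 j else 0) ∂Pobs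
        = ∫ o, g o.1 * (e k o.1 * μreg j k o.1) ∂Pobs)
    -- `e` is the true propensity score
    (hprop : ∀ (k : Fin K) (g : 𝒳 → ℝ), Measurable g → (∃ C, ∀ x, |g x| ≤ C) →
      ∫ o, g o.1 * (if o.2.1 = k then (1 : ℝ) else 0) ∂Pobs
        = ∫ o, g o.1 * e k o.1 ∂Pobs)
    -- an arbitrary measurable outcome-regression with values in [0,1]
    (m : Fin dY → Fin K → 𝒳 → ℝ)
    (hmmeas : ∀ j k, Measurable (m j k))
    (hmbdd : ∀ j k x, m j k x ∈ Set.Icc (0 : ℝ) 1)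
    -- the policy π
    (π : Fin K → 𝒳 → ℝ) (hπmeas : ∀ k, Measurable (π k))
    (hπnonneg : ∀ k x, 0 ≤ π k x) (hπsum : ∀ x, ∑ k : Fin K, π k x = 1)
    (j : Fin dY) :
    ∫ o, psiDR K dY e m π j o ∂Pobs
      = ∫ o, ∑ k : Fin K, π k o.1 * μreg j k o.1 ∂Pobs := by
  have hepos : ∀ k x, 0 < e k x := fun k x => lt_of_lt_of_le hc.1 (hpos k x)
  have hπle : ∀ k x, π k x ≤ 1 := fun k x => by
    rw [← hπsum x]
    exact Finset.single_le_sum (f := fun k => π k x) (fun i _ => hπnonneg i x) (Finset.mem_univ k)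
  -- bounded measurable functions are integrable
  have hint : ∀ (f : 𝒳 × Fin K × (Fin dY → ℝ) → ℝ) (C : ℝ), Measurable f →
      (∀ᵐ o ∂Pobs, |f o| ≤ C) → Integrable f Pobs := fun f C hf hb =>
    Integrable.of_bound hf.aestronglyMeasurable C hb
  have hg1 : ∀ k x, |π k x / e k x| ≤ 1 / c := fun k x => by
    rw [abs_of_nonneg (div_nonneg (hπnonneg k x) (hepos k x).le)]
    exact div_le_div₀ zero_le_one (hπle k x) hc.1 (hpos k x)
  have hg2 : ∀ k x, |π k x * m j k x / e k x| ≤ 1 / c := fun k x => by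
    rw [abs_of_nonneg (div_nonneg (mul_nonneg (hπnonneg k x) (hmbdd j k x).1) (hepos k x).le)]
    exact div_le_div₀ zero_le_one (mul_le_one₀ (hπle k x) (hmbdd j k x).1 (hmbdd j k x).2)
      hc.1 (hpos k x)
  have hc0 : 0 ≤ 1 / c := (one_div_pos.2 hc.1).le
  have hset : ∀ k : Fin K, MeasurableSet {o : 𝒳 × Fin K × (Fin dY → ℝ) | o.2.1 = k} := fun k =>
    measurable_snd.fst (measurableSet_singleton k)
  have hYm : Measurable (fun o : 𝒳 × Fin K × (Fin dY → ℝ) => o.2.2 j) :=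
    (measurable_pi_apply j).comp measurable_snd.snd
  have I1 : ∀ k, Integrable (fun o : 𝒳 × Fin K × (Fin dY → ℝ) =>
      (π k o.1 / e k o.1) * (if o.2.1 = k then o.2.2 j else 0)) Pobs := fun k => by
    refine hint _ (1 / c) ((((hπmeas k).div (hemeas k)).comp measurable_fst).mul
      (Measurable.ite (hset k) hYm measurable_const)) ?_
    filter_upwards [hY] with o ho
    rw [abs_mul]
    rw [← mul_one (1 / c)]
    refine mul_le_mul (hg1 k o.1) ?_ (abs_nonneg _) hc0
    split_ifs
    · rw [abs_of_nonneg (ho j).1]; exact (ho j).2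
    · simp
  have I2 : ∀ k, Integrable (fun o : 𝒳 × Fin K × (Fin dY → ℝ) =>
      (π k o.1 * m j k o.1 / e k o.1) * (if o.2.1 = k then (1 : ℝ) else 0)) Pobs := fun k => by
    refine hint _ (1 / c) (((((hπmeas k).mul (hmmeas j k)).div (hemeas k)).comp measurable_fst).mul
      (Measurable.ite (hset k) measurable_const measurable_const)) ?_
    refine Filter.Eventually.of_forall fun o => ?_
    rw [abs_mul]
    rw [← mul_one (1 / c)]
    refine mul_le_mul (hg2 k o.1) ?_ (abs_nonneg _) hc0
    split_ifs <;> simp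
  have I3 : ∀ f : Fin K → 𝒳 → ℝ, (∀ k, Measurable (f k)) →
      (∀ k x, f k x ∈ Set.Icc (0 : ℝ) 1) → ∀ k,
      Integrable (fun o : 𝒳 × Fin K × (Fin dY → ℝ) => π k o.1 * f k o.1) Pobs :=
      fun f hf hb k => by
    refine hint _ 1 (((hπmeas k).mul (hf k)).comp measurable_fst) ?_
    refine Filter.Eventually.of_forall fun o => ?_
    rw [abs_of_nonneg (mul_nonneg (hπnonneg k _) (hb k _).1)]
    exact mul_le_one₀ (hπle k _) (hb k _).1 (hb k _).2
  have E1 : ∀ k, ∫ o, (π k o.1 / e k o.1) * (if o.2.1 = k then o.2.2 j else 0) ∂Pobs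
      = ∫ o, π k o.1 * μreg j k o.1 ∂Pobs := fun k => by
    refine (hcond j k (fun x => π k x / e k x) ((hπmeas k).div (hemeas k)) ⟨_, hg1 k⟩).trans ?_
    congr 1; funext o
    have := (hepos k o.1).ne'
    field_simp
  have E2 : ∀ k, ∫ o, (π k o.1 * m j k o.1 / e k o.1) * (if o.2.1 = k then (1 : ℝ) else 0) ∂Pobs
      = ∫ o, π k o.1 * m j k o.1 ∂Pobs := fun k => by
    refine (hprop k (fun x => π k x * m j k x / e k x)
      (((hπmeas k).mul (hmmeas j k)).div (hemeas k)) ⟨_, hg2 k⟩).trans ?_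
    congr 1; funext o
    have := (hepos k o.1).ne'
    field_simp
  have hpsi : ∀ o, psiDR K dY e m π j o = ∑ k : Fin K,
      ((π k o.1 / e k o.1) * (if o.2.1 = k then o.2.2 j else 0)
        - (π k o.1 * m j k o.1 / e k o.1) * (if o.2.1 = k then (1 : ℝ) else 0)
        + π k o.1 * m j k o.1) := fun o => by
    unfold psiDR
    refine Finset.sum_congr rfl fun k _ => ?_
    split_ifs <;> ring
  have Im := I3 (m j) (hmmeas j) (hmbdd j)
  simp_rw [hpsi]
  rw [integral_finsetSum, integral_finsetSum _ fun k _ => I3 (μreg j) (hμmeas j) (hμbdd j) k]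
  swap
  · intro k _
    exact ((I1 k).sub (I2 k)).add (Im k)
  refine Finset.sum_congr rfl fun k _ => ?_
  have h1 := integral_add ((I1 k).sub (I2 k)) (Im k)
  have h2 := integral_sub (I1 k) (I2 k)
  simp only [Pi.sub_apply] at h1
  rw [h1, h2, E1, E2]
  ring
end

section
/- Let 𝒜 be an ε-stable (ε-differentially private) randomized algorithm applied to n i.i.d. observations {O_i}_{i=1}^n, and let {O_i'}_{i=1}^n be an independent identically distributed copy. Define the δ-approximate max information I^δ(𝒜({O_i}); {O_i}) = max over measurable events ℰ of log[(P((𝒜({O_i}), {O_i}) ∈ ℰ) − δ) / P((𝒜({O_i}), {O_i'}) ∈ ℰ)]. Then for every δ ∈ (0,1), I^δ(𝒜({O_i}); {O_i}) ≤ (n/2)ε² + ε√(n log(2/δ)/2). -/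
set_option autoImplicit false

open MeasureTheory ProbabilityTheory

/-- Two `n`-tuples of observations are adjacent if they differ in at most one entry. -/
def AdjacentTuples {𝒪 : Type*} {n : ℕ} (d d' : Fin n → 𝒪) : Prop :=
  ∃ i₀ : Fin n, ∀ i : Fin n, i ≠ i₀ → d i = d' i

theorem hoeffding_ae {Ω : Type*} [MeasurableSpace Ω] (μ : Measure Ω) [IsProbabilityMeasure μ]
    (φ : Ω → ℝ) (hφ : Measurable φ) (C : ℝ) (hC : ∀ x, |φ x| ≤ C) (ε : ℝ) (hε : 0 ≤ ε)
    (h : ∀ᵐ x ∂μ, ∀ᵐ y ∂μ, φ y ≤ φ x + ε) (m : ℝ) :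
    ∫ x, Real.exp (m * φ x) ∂μ ≤ Real.exp (m * ∫ x, φ x ∂μ + m ^ 2 * ε ^ 2 / 8) := by
  set b := essSup φ μ with hb
  have hbd : Filter.IsBoundedUnder (· ≤ ·) (ae μ) φ :=
    Filter.isBoundedUnder_of ⟨C, fun x => (abs_le.1 (hC x)).2⟩
  have hcb : Filter.IsCoboundedUnder (· ≤ ·) (ae μ) φ :=
    Filter.IsBoundedUnder.isCoboundedUnder_le
      (Filter.isBoundedUnder_of ⟨-C, fun x => (abs_le.1 (hC x)).1⟩)
  have h1 : ∀ᵐ x ∂μ, φ x ∈ Set.Icc (b - ε) b := by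
    filter_upwards [h, ae_le_essSup (f := φ) (μ := μ) hbd] with x hx hx2
    have : b ≤ φ x + ε := essSup_le_of_ae_le _ hx hcb
    exact ⟨by linarith, hx2⟩
  have h2 := (hasSubgaussianMGF_of_mem_Icc (μ := μ) hφ.aemeasurable h1).mgf_le m
  set A := ∫ x, φ x ∂μ with hA
  have e1 : mgf (fun ω => φ ω - A) μ m = Real.exp (-(m * A)) * ∫ x, Real.exp (m * φ x) ∂μ := by
    rw [mgf, ← integral_const_mul]
    congr 1; ext x
    rw [← Real.exp_add]; ring_nf
  rw [e1] at h2
  have e2 : (((‖b - (b - ε)‖₊ / 2) ^ 2 : NNReal) : ℝ) = ε ^ 2 / 4 := by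
    push_cast
    rw [sub_sub_cancel, Real.norm_of_nonneg hε]; ring
  rw [e2] at h2
  have h3 := mul_le_mul_of_nonneg_left h2 (Real.exp_pos (m * A)).le
  rw [← mul_assoc, ← Real.exp_add, ← Real.exp_add, add_neg_cancel, Real.exp_zero, one_mul] at h3
  refine h3.trans (Real.exp_le_exp.2 (le_of_eq (by ring)))

theorem integrable_of_bdd {Ω : Type*} [MeasurableSpace Ω] (μ : Measure Ω) [IsFiniteMeasure μ]
    (φ : Ω → ℝ) (hφ : Measurable φ) (C : ℝ) (hC : ∀ x, |φ x| ≤ C) : Integrable φ μ :=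
  Integrable.of_bound hφ.aestronglyMeasurable C (Filter.Eventually.of_forall hC)

theorem exp_bdd (m C t : ℝ) (h : |t| ≤ C) : |Real.exp (m * t)| ≤ Real.exp (|m| * C) := by
  rw [abs_of_pos (Real.exp_pos _)]
  refine Real.exp_le_exp.2 ((le_abs_self _).trans ?_)
  rw [abs_mul]; gcongr

theorem mp_cons {𝒪 : Type*} [MeasurableSpace 𝒪] (μ : Measure 𝒪) [IsProbabilityMeasure μ] (n : ℕ) :
    MeasurePreserving (fun p : 𝒪 × (Fin n → 𝒪) => (Fin.cons p.1 p.2 : Fin (n + 1) → 𝒪))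
      (μ.prod (Measure.pi fun _ : Fin n => μ)) (Measure.pi fun _ : Fin (n + 1) => μ) := by
  have h := (measurePreserving_piFinSuccAbove (fun _ : Fin (n + 1) => μ) 0).symm
  convert h using 1
  ext p : 1
  simp [MeasurableEquiv.piFinSuccAbove]
  rfl

theorem mp_triple {A B C : Type*} [MeasurableSpace A] [MeasurableSpace B] [MeasurableSpace C]
    (a : Measure A) (b : Measure B) (c : Measure C) [SFinite a] [SFinite b] [SFinite c] :
    MeasurePreserving (fun p : (B × C) × A => ((p.2, p.1.1), p.1.2)) ((b.prod c).prod a)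
      ((a.prod b).prod c) := by
  have h1 : MeasurePreserving Prod.swap ((b.prod c).prod a) (a.prod (b.prod c)) :=
    Measure.measurePreserving_swap
  have h2 := (measurePreserving_prodAssoc a b c).symm
  exact h2.comp h1

theorem mcdiarmid_mgf {𝒪 : Type*} [MeasurableSpace 𝒪] (μ : Measure 𝒪) [IsProbabilityMeasure μ]
    (ε : ℝ) (hε : 0 ≤ ε) (C : ℝ) (m : ℝ) (n : ℕ) :
    ∀ (g : (Fin n → 𝒪) → ℝ), Measurable g → (∀ d, |g d| ≤ C) →
      (∀ i, ∀ᵐ p ∂((Measure.pi fun _ : Fin n => μ).prod μ),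
        g p.1 ≤ g (Function.update p.1 i p.2) + ε) →
      ∫ d, Real.exp (m * g d) ∂(Measure.pi fun _ : Fin n => μ) ≤
        Real.exp (m * ∫ d, g d ∂(Measure.pi fun _ : Fin n => μ) + n * (m ^ 2 * ε ^ 2 / 8)) := by
  induction n with
  | zero =>
    intro g hg hC _
    rw [Measure.pi_of_empty]
    simp
  | succ n ih =>
    intro g hg hC hd
    set P := Measure.pi fun _ : Fin n => μ with hP
    have hmc := mp_cons μ n
    have hcm : Measurable (fun p : 𝒪 × (Fin n → 𝒪) => g (Fin.cons p.1 p.2)) :=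
      hg.comp hmc.measurable
    have hcm' : Measurable (fun p : (Fin n → 𝒪) × 𝒪 => g (Fin.cons p.2 p.1)) :=
      hcm.comp measurable_swap
    have hq := (hmc.prod (MeasurePreserving.id μ)).comp (mp_triple μ P μ)
    have hd' : ∀ i, ∀ᵐ p ∂(P.prod μ), ∀ᵐ y ∂μ, g (Fin.cons y p.1) ≤
        g (Function.update (Fin.cons y p.1 : Fin (n + 1) → 𝒪) i p.2) + ε := by
      intro i
      exact Measure.ae_ae_of_ae_prod (hq.quasiMeasurePreserving.ae (hd i))
    set h : (Fin n → 𝒪) → ℝ := fun d => ∫ x, g (Fin.cons x d) ∂μ with hh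
    have hint : ∀ d : Fin n → 𝒪, Integrable (fun x => g (Fin.cons x d)) μ := fun d =>
      integrable_of_bdd μ _ (hcm.comp (by fun_prop : Measurable fun x => (x, d))) C
        (fun x => hC _)
    have hhm : Measurable h :=
      (hcm'.stronglyMeasurable.integral_prod_right').measurable
    have hhC : ∀ d, |h d| ≤ C := by
      intro d
      have := norm_integral_le_of_norm_le_const (μ := μ) (f := fun x => g (Fin.cons x d)) (C := C)
        (Filter.Eventually.of_forall fun x => hC _)
      simpa using this
    have hhd : ∀ i, ∀ᵐ p ∂(P.prod μ), h p.1 ≤ h (Function.update p.1 i p.2) + ε := by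
      intro i
      filter_upwards [hd' i.succ] with p hp
      have : h (Function.update p.1 i p.2) + ε
          = ∫ x, (g (Fin.cons x (Function.update p.1 i p.2)) + ε) ∂μ := by
        rw [integral_add (hint _) (integrable_const _)]; simp [hh]
      rw [this]
      refine integral_mono_ae (hint _) ((hint _).add (integrable_const _)) ?_
      filter_upwards [hp] with y hy
      rwa [Fin.cons_update]
    have hih := ih h hhm hhC hhd
    have hbase : ∀ᵐ d ∂P, ∫ x, Real.exp (m * g (Fin.cons x d)) ∂μ ≤
        Real.exp (m * h d + m ^ 2 * ε ^ 2 / 8) := by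
      filter_upwards [Measure.ae_ae_of_ae_prod (hd' 0)] with d hdd
      refine hoeffding_ae μ _ (hcm.comp (by fun_prop : Measurable fun x => (x, d))) C
        (fun x => hC _) ε hε ?_ m
      filter_upwards [hdd] with x hx
      filter_upwards [hx] with y hy
      simpa using hy
    have hgi : ∫ d, g d ∂(Measure.pi fun _ : Fin (n + 1) => μ) = ∫ d, h d ∂P := by
      rw [← hmc.map_eq, integral_map hmc.measurable.aemeasurable hg.aestronglyMeasurable,
        integral_prod_symm]
      exact integrable_of_bdd _ _ hcm C (fun x => hC _)
    have hem : Measurable fun d => Real.exp (m * g d) := by fun_prop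
    have hgi2 : ∫ d, Real.exp (m * g d) ∂(Measure.pi fun _ : Fin (n + 1) => μ)
        = ∫ d, ∫ x, Real.exp (m * g (Fin.cons x d)) ∂μ ∂P := by
      rw [← hmc.map_eq, integral_map hmc.measurable.aemeasurable hem.aestronglyMeasurable,
        integral_prod_symm]
      exact integrable_of_bdd _ _ (hem.comp hmc.measurable) _ (fun x => exp_bdd m C _ (hC _))
    rw [hgi, hgi2]
    have hei : Integrable (fun d => Real.exp (m * h d)) P :=
      integrable_of_bdd _ _ (by fun_prop) _ (fun x => exp_bdd m C _ (hhC _))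
    calc _ ≤ ∫ d, Real.exp (m * h d) * Real.exp (m ^ 2 * ε ^ 2 / 8) ∂P := by
          refine integral_mono_of_nonneg (Filter.Eventually.of_forall fun d =>
            integral_nonneg fun x => (Real.exp_pos _).le) (hei.mul_const _) ?_
          filter_upwards [hbase] with d hd
          rwa [← Real.exp_add]
      _ = (∫ d, Real.exp (m * h d) ∂P) * Real.exp (m ^ 2 * ε ^ 2 / 8) := integral_mul_const _ _
      _ ≤ Real.exp (m * ∫ d, h d ∂P + n * (m ^ 2 * ε ^ 2 / 8)) * Real.exp (m ^ 2 * ε ^ 2 / 8) := by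
          gcongr
      _ = _ := by
          rw [← Real.exp_add]; congr 1; push_cast; ring

theorem stable_all {𝒪 Θ : Type*} [MeasurableSpace 𝒪] [MeasurableSpace Θ] (n : ℕ) (c : ENNReal)
    (κ : Kernel (Fin n → 𝒪) Θ)
    (hstable : ∀ d d' : Fin n → 𝒪, AdjacentTuples d d' →
      ∀ E : Set Θ, MeasurableSet E → κ d E ≤ c * κ d' E)
    (d d' : Fin n → 𝒪) (E : Set Θ) (hE : MeasurableSet E) : κ d E ≤ c ^ n * κ d' E := by
  have key : ∀ k : ℕ, k ≤ n →
      κ d E ≤ c ^ k * κ (fun j : Fin n => if (j : ℕ) < k then d' j else d j) E := by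
    intro k
    induction k with
    | zero => intro _; simp
    | succ k ih =>
      intro hk
      refine (ih (by omega)).trans ?_
      rw [pow_succ, mul_assoc]
      gcongr
      refine hstable _ _ ⟨⟨k, hk⟩, fun i hi => ?_⟩ E hE
      have : (i : ℕ) ≠ k := fun h => hi (Fin.ext h)
      by_cases h : (i : ℕ) < k
      · simp [h, Nat.lt_succ_of_lt h]
      · have h2 : ¬ (i : ℕ) < k + 1 := by omega
        simp [h, h2]
  simpa using key n le_rfl

theorem exists_log_density {Ω : Type*} [MeasurableSpace Ω] (J Q : Measure Ω) [IsFiniteMeasure J]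
    [IsFiniteMeasure Q] (a : ℝ) (ha : 0 ≤ a)
    (h1 : ∀ E, MeasurableSet E → J E ≤ ENNReal.ofReal (Real.exp a) * Q E)
    (h2 : ∀ E, MeasurableSet E → Q E ≤ ENNReal.ofReal (Real.exp a) * J E) :
    ∃ g : Ω → ℝ, Measurable g ∧ (∀ x, |g x| ≤ a) ∧
      J = Q.withDensity (fun x => ENNReal.ofReal (Real.exp (g x))) := by
  have hac : J ≪ Q := by
    refine Measure.AbsolutelyContinuous.mk fun s hs h0 => ?_
    have := h1 s hs
    simpa [h0] using this
  set f := J.rnDeriv Q with hf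
  have hfm : Measurable f := Measure.measurable_rnDeriv _ _
  have hJ : Q.withDensity f = J := Measure.withDensity_rnDeriv_eq _ _ hac
  have b1 : ∀ᵐ x ∂Q, f x ≤ ENNReal.ofReal (Real.exp a) := by
    refine ae_le_of_forall_setLIntegral_le_of_sigmaFinite hfm fun s hs _ => ?_
    rw [← withDensity_apply _ hs, hJ, setLIntegral_const]
    exact h1 s hs
  have b2 : ∀ᵐ x ∂Q, (1 : ENNReal) ≤ ENNReal.ofReal (Real.exp a) * f x := by
    refine ae_le_of_forall_setLIntegral_le_of_sigmaFinite measurable_const fun s hs _ => ?_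
    rw [lintegral_const_mul _ hfm, setLIntegral_const, one_mul, ← withDensity_apply _ hs, hJ]
    exact h2 s hs
  refine ⟨fun x => max (-a) (min a (Real.log (f x).toReal)), by fun_prop, ?_, ?_⟩
  · intro x
    rw [abs_le]
    exact ⟨le_max_left _ _, max_le (by linarith) (min_le_left _ _)⟩
  · rw [← hJ]
    refine withDensity_congr_ae ?_
    filter_upwards [b1, b2] with x hx1 hx2
    have hfin : f x ≠ ⊤ := (hx1.trans_lt ENNReal.ofReal_lt_top).ne
    obtain ⟨t, ht, hft⟩ : ∃ t : ℝ, 0 ≤ t ∧ f x = ENNReal.ofReal t :=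
      ⟨(f x).toReal, ENNReal.toReal_nonneg, (ENNReal.ofReal_toReal hfin).symm⟩
    rw [hft] at hx1 hx2 ⊢
    rw [ENNReal.toReal_ofReal ht]
    rw [← ENNReal.ofReal_mul (Real.exp_pos a).le, ENNReal.one_le_ofReal] at hx2
    rw [ENNReal.ofReal_le_ofReal_iff (Real.exp_pos a).le] at hx1
    have htp : 0 < t := by
      rcases ht.eq_or_lt with h | h
      · rw [← h] at hx2; norm_num at hx2
      · exact h
    have l1 : Real.log t ≤ a := (Real.log_le_iff_le_exp htp).2 hx1
    have l2 : -a ≤ Real.log t := by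
      rw [Real.le_log_iff_exp_le htp, Real.exp_neg, inv_le_iff_one_le_mul₀' (Real.exp_pos a)]
      exact hx2
    rw [min_eq_right l1, max_eq_right l2, Real.exp_log htp]

theorem transfer_density {X X' Θ : Type*} [MeasurableSpace X] [MeasurableSpace X']
    [MeasurableSpace Θ] (P : Measure X) [IsProbabilityMeasure P] (P' : Measure X')
    [IsProbabilityMeasure P'] (ν : Measure Θ) [IsProbabilityMeasure ν] (κ : Kernel X Θ)
    [IsMarkovKernel κ] (w : X × Θ → ENNReal) (hw : Measurable w)
    (hJ : P ⊗ₘ κ = (P.prod ν).withDensity w) (T : X' → X)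
    (hT : Measure.QuasiMeasurePreserving T P' P) :
    P' ⊗ₘ (κ.comap T hT.measurable) =
      (P'.prod ν).withDensity (fun p => w (T p.1, p.2)) := by
  have hTm := hT.measurable
  have hw' : Measurable fun p : X' × Θ => w (T p.1, p.2) := hw.comp (by fun_prop)
  refine Measure.ext_prod fun {s t} hs ht => ?_
  have hae : ∀ᵐ d ∂P, κ d t = ∫⁻ θ in t, w (d, θ) ∂ν := by
    refine ae_eq_of_forall_setLIntegral_eq_of_sigmaFinite (κ.measurable_coe ht)
      (hw.lintegral_prod_right') fun A hA _ => ?_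
    rw [← Measure.compProd_apply_prod hA ht, hJ, withDensity_apply _ (hA.prod ht),
      ← Measure.prod_restrict, lintegral_prod _ hw.aemeasurable]
  have hae' := hT.ae hae
  rw [Measure.compProd_apply_prod hs ht, withDensity_apply _ (hs.prod ht),
      ← Measure.prod_restrict, lintegral_prod _ hw'.aemeasurable]
  refine lintegral_congr_ae (ae_restrict_of_ae ?_)
  filter_upwards [hae'] with x hx
  simpa [Kernel.comap_apply] using hx

theorem density_compare {X Θ : Type*} [MeasurableSpace X]
    [MeasurableSpace Θ] (P : Measure X) [IsProbabilityMeasure P]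
    (ν : Measure Θ) [IsProbabilityMeasure ν] (κ₁ κ₂ : Kernel X Θ)
    [IsMarkovKernel κ₁] [IsMarkovKernel κ₂] (w₁ w₂ : X × Θ → ENNReal)
    (hw₁ : Measurable w₁) (hw₂ : Measurable w₂)
    (hJ₁ : P ⊗ₘ κ₁ = (P.prod ν).withDensity w₁)
    (hJ₂ : P ⊗ₘ κ₂ = (P.prod ν).withDensity w₂) (c : ENNReal)
    (h : ∀ x E, MeasurableSet E → κ₁ x E ≤ c * κ₂ x E) :
    ∀ᵐ p ∂(P.prod ν), w₁ p ≤ c * w₂ p := by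
  refine ae_le_of_forall_setLIntegral_le_of_sigmaFinite hw₁ fun s hs _ => ?_
  rw [lintegral_const_mul _ hw₂, ← withDensity_apply _ hs, ← withDensity_apply _ hs, ← hJ₁,
    ← hJ₂, Measure.compProd_apply hs, Measure.compProd_apply hs,
    ← lintegral_const_mul _ (Kernel.measurable_kernel_prodMk_left hs)]
  exact lintegral_mono fun x => h x _ (measurable_prodMk_left hs)

theorem mp_update {𝒪 : Type*} [MeasurableSpace 𝒪] (μ : Measure 𝒪) [IsProbabilityMeasure μ] (n : ℕ)
    (i : Fin n) :
    MeasurePreserving (fun p : (Fin n → 𝒪) × 𝒪 => Function.update p.1 i p.2)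
      ((Measure.pi fun _ : Fin n => μ).prod μ) (Measure.pi fun _ : Fin n => μ) := by
  have hm : Measurable (fun p : (Fin n → 𝒪) × 𝒪 => Function.update p.1 i p.2) := by
    rw [measurable_pi_iff]
    intro j
    by_cases h : j = i
    · subst h; simpa using measurable_snd
    · simp only [Function.update_of_ne h]; fun_prop
  refine ⟨hm, (Measure.pi_eq fun s hs => ?_).symm⟩
  rw [Measure.map_apply hm (MeasurableSet.univ_pi hs)]
  have : (fun p : (Fin n → 𝒪) × 𝒪 => Function.update p.1 i p.2) ⁻¹' (Set.univ.pi s)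
      = (Set.univ.pi (Function.update s i Set.univ)) ×ˢ (s i) := by
    ext p
    simp only [Set.mem_preimage, Set.mem_pi, Set.mem_univ, true_imp_iff, Set.mem_prod]
    constructor
    · intro h
      refine ⟨fun j => ?_, by simpa using h i⟩
      by_cases hj : j = i
      · subst hj; simp
      · simpa [hj] using h j
    · rintro ⟨h, h'⟩ j
      by_cases hj : j = i
      · subst hj; simpa using h'
      · simpa [hj] using h j
  rw [this, Measure.prod_prod, Measure.pi_pi, ← Finset.prod_erase_mul _ _ (Finset.mem_univ i),
    ← Finset.prod_erase_mul Finset.univ (fun j => μ (s j)) (Finset.mem_univ i)]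
  simp only [Function.update_self, measure_univ, mul_one]
  congr 1
  refine Finset.prod_congr rfl fun j hj => ?_
  rw [Function.update_of_ne (Finset.ne_of_mem_erase hj)]

theorem exponent_bound (n ε r L k m : ℝ) (hn : 0 < n) (hε : 0 < ε) (hr : 0 ≤ r)
    (hr2 : r ^ 2 = n * L / 2) (hk : k = n / 2 * ε ^ 2 + ε * r)
    (hm : m = 2 + 4 * r / (n * ε)) :
    n * (m ^ 2 * ε ^ 2 / 8) - (m - 1) * k ≤ -L := by
  have hL : L = 2 * r ^ 2 / n := by rw [hr2]; field_simp
  have : n * (m ^ 2 * ε ^ 2 / 8) - (m - 1) * k = -(ε * r) - L := by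
    rw [hL, hk, hm]; field_simp; ring
  rw [this]
  have := mul_nonneg hε.le hr
  linarith

theorem max_information_bound_of_stable
    {𝒪 Θ : Type*} [MeasurableSpace 𝒪] [MeasurableSpace Θ]
    (Pobs : Measure 𝒪) [IsProbabilityMeasure Pobs]
    (n : ℕ) (hn : 0 < n) (ε : ℝ) (hε : 0 < ε)
    (κ : Kernel (Fin n → 𝒪) Θ) [IsMarkovKernel κ]
    -- ε-stability of the algorithm κ
    (hstable : ∀ d d' : Fin n → 𝒪, AdjacentTuples d d' →
      ∀ E : Set Θ, MeasurableSet E →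
        κ d E ≤ ENNReal.ofReal (Real.exp ε) * κ d' E)
    (δ : ℝ) (hδ : δ ∈ Set.Ioo (0 : ℝ) 1) :
    ∀ E : Set ((Fin n → 𝒪) × Θ), MeasurableSet E →
      (((Measure.pi fun _ : Fin n => Pobs) ⊗ₘ κ) E).toReal - δ
        ≤ Real.exp ((n / 2) * ε ^ 2 + ε * Real.sqrt (n * Real.log (2 / δ) / 2))
          * (((Measure.pi fun _ : Fin n => Pobs).prod
              ((Measure.pi fun _ : Fin n => Pobs).bind fun d => κ d)) E).toReal := by
  intro E hE
  obtain ⟨hδ0, hδ1⟩ := hδ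
  set P := Measure.pi fun _ : Fin n => Pobs with hP
  have hνp : IsProbabilityMeasure (P.bind fun d => κ d) :=
    inferInstanceAs (IsProbabilityMeasure (P.bind κ))
  have hνa : ∀ A, MeasurableSet A → (P.bind fun d => κ d) A = ∫⁻ d, κ d A ∂P := fun A hA =>
    Measure.bind_apply hA κ.measurable.aemeasurable
  set ν := P.bind fun d => κ d with hν
  set J := P ⊗ₘ κ with hJdef
  set Q := P.prod ν with hQdef
  set a : ℝ := n * ε with ha
  have ha0 : 0 ≤ a := by positivity
  have hK : ENNReal.ofReal (Real.exp a) = ENNReal.ofReal (Real.exp ε) ^ n := by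
    rw [ha, Real.exp_nat_mul, ENNReal.ofReal_pow (Real.exp_pos _).le]
  have hall := stable_all n _ κ hstable
  rw [← hK] at hall
  have hκν : ∀ d A, MeasurableSet A → κ d A ≤ ENNReal.ofReal (Real.exp a) * ν A := by
    intro d A hA
    rw [hνa A hA, ← lintegral_const_mul _ (κ.measurable_coe hA)]
    calc κ d A = ∫⁻ _, κ d A ∂P := by simp
      _ ≤ _ := lintegral_mono fun d' => hall d d' A hA
  have hνκ : ∀ d A, MeasurableSet A → ν A ≤ ENNReal.ofReal (Real.exp a) * κ d A := by
    intro d A hA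
    rw [hνa A hA]
    calc _ ≤ ∫⁻ _, ENNReal.ofReal (Real.exp a) * κ d A ∂P :=
          lintegral_mono fun d' => hall d' d A hA
      _ = _ := by simp
  obtain ⟨g, hg, hgC, hJ⟩ := exists_log_density J Q a ha0
    (by
      intro A hA
      rw [hJdef, hQdef, Measure.compProd_apply hA, Measure.prod_apply hA,
        ← lintegral_const_mul _ (measurable_measure_prodMk_left hA)]
      exact lintegral_mono fun d => hκν d _ (measurable_prodMk_left hA))
    (by
      intro A hA
      rw [hJdef, hQdef, Measure.compProd_apply hA, Measure.prod_apply hA,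
        ← lintegral_const_mul _ (Kernel.measurable_kernel_prodMk_left hA)]
      exact lintegral_mono fun d => hνκ d _ (measurable_prodMk_left hA))
  have hwm : Measurable fun p => ENNReal.ofReal (Real.exp (g p)) := by fun_prop
  -- bounded differences of the log-density
  have hdiff : ∀ i, ∀ᵐ θ ∂ν, ∀ᵐ p ∂(P.prod Pobs),
      g (p.1, θ) ≤ g (Function.update p.1 i p.2, θ) + ε := by
    intro i
    have hu := mp_update Pobs n i
    have hq1 : Measure.QuasiMeasurePreserving Prod.fst (P.prod Pobs) P :=
      Measure.quasiMeasurePreserving_fst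
    have t1 := transfer_density P (P.prod Pobs) ν κ _ hwm hJ _ hq1
    have t2 := transfer_density P (P.prod Pobs) ν κ _ hwm hJ _ hu.quasiMeasurePreserving
    have hum := hu.measurable
    have hc := density_compare (P.prod Pobs) ν _ _ _ _ (by fun_prop)
      (hwm.comp ((hum.comp measurable_fst).prodMk measurable_snd)) t1 t2
      (ENNReal.ofReal (Real.exp ε))
      (by
        intro x A hA
        rw [Kernel.comap_apply, Kernel.comap_apply]
        refine hstable _ _ ⟨i, fun j hj => ?_⟩ A hA
        simp [hj])
    have hsw : MeasurePreserving Prod.swap (ν.prod (P.prod Pobs)) ((P.prod Pobs).prod ν) :=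
      Measure.measurePreserving_swap
    refine Measure.ae_ae_of_ae_prod (p := fun q : Θ × ((Fin n → 𝒪) × 𝒪) =>
      g (q.2.1, q.1) ≤ g (Function.update q.2.1 i q.2.2, q.1) + ε) ?_
    filter_upwards [hsw.quasiMeasurePreserving.ae hc] with q hq
    simp only [Function.comp_apply] at hq
    rw [← ENNReal.ofReal_mul (Real.exp_pos _).le, ← Real.exp_add,
      ENNReal.ofReal_le_ofReal_iff (Real.exp_pos _).le, Real.exp_le_exp] at hq
    rw [add_comm]
    exact hq
  -- normalization
  have hnorm : ∀ᵐ θ ∂ν, ∫⁻ d, ENNReal.ofReal (Real.exp (g (d, θ))) ∂P = 1 := by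
    refine ae_eq_of_forall_setLIntegral_eq_of_sigmaFinite
      (hwm.lintegral_prod_left') measurable_const fun B hB _ => ?_
    have e1 : J (Set.univ ×ˢ B) = ν B := by
      rw [hJdef, Measure.compProd_apply_prod MeasurableSet.univ hB, Measure.restrict_univ,
        hνa B hB]
    rw [hJ, withDensity_apply _ (MeasurableSet.univ.prod hB), hQdef, ← Measure.prod_restrict,
      Measure.restrict_univ, lintegral_prod_symm _ hwm.aemeasurable] at e1
    rw [e1]; simp
  -- parameters
  set L := Real.log (2 / δ) with hL
  have hL0 : 0 ≤ L := Real.log_nonneg (by rw [le_div_iff₀ hδ0]; linarith)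
  set r := Real.sqrt (n * L / 2) with hr
  have hr0 : 0 ≤ r := Real.sqrt_nonneg _
  have hr2 : r ^ 2 = n * L / 2 := Real.sq_sqrt (by positivity)
  set k : ℝ := n / 2 * ε ^ 2 + ε * r with hk
  have hnR : (0 : ℝ) < n := by exact_mod_cast hn
  obtain ⟨m, hm⟩ : ∃ m : ℝ, m = 2 + 4 * r / (n * ε) := ⟨_, rfl⟩
  have hm2 : 2 ≤ m := by
    have : 0 ≤ 4 * r / (n * ε) := by positivity
    linarith
  have hexp := exponent_bound n ε r L k m hnR hε hr0 hr2 hk hm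
  -- moment bound
  have hmom : ∀ᵐ θ ∂ν, ∫⁻ d, ENNReal.ofReal (Real.exp (m * g (d, θ))) ∂P ≤
      ENNReal.ofReal (Real.exp (n * (m ^ 2 * ε ^ 2 / 8))) := by
    filter_upwards [ae_all_iff.2 hdiff, hnorm] with θ h1 h2
    have hgθ : Measurable fun d => g (d, θ) := by fun_prop
    have hmc := mcdiarmid_mgf Pobs ε hε.le a m n (fun d => g (d, θ)) hgθ (fun d => hgC _) h1
    have hi1 : Integrable (fun d => Real.exp (g (d, θ))) P := by
      refine integrable_of_bdd _ _ (by fun_prop) (Real.exp (|1| * a)) fun d => ?_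
      simpa using exp_bdd 1 a _ (hgC (d, θ))
    have him : Integrable (fun d => Real.exp (m * g (d, θ))) P :=
      integrable_of_bdd _ _ (by fun_prop) _ fun d => exp_bdd m a _ (hgC (d, θ))
    have h3 : ∫ d, Real.exp (g (d, θ)) ∂P = 1 := by
      rw [integral_eq_lintegral_of_nonneg_ae
        (Filter.Eventually.of_forall fun d => (Real.exp_pos _).le) hi1.aestronglyMeasurable, h2]
      simp
    have h4 : ∫ d, g (d, θ) ∂P ≤ 0 := by
      calc ∫ d, g (d, θ) ∂P ≤ ∫ d, (Real.exp (g (d, θ)) - 1) ∂P := by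
            refine integral_mono (integrable_of_bdd _ _ hgθ a fun d => hgC _)
              (hi1.sub (integrable_const _)) fun d => ?_
            have := Real.add_one_le_exp (g (d, θ))
            show g (d, θ) ≤ Real.exp (g (d, θ)) - 1
            linarith
        _ = 0 := by
            rw [integral_sub hi1 (integrable_const _), h3]; simp
    rw [← ofReal_integral_eq_lintegral_ofReal him
      (Filter.Eventually.of_forall fun d => (Real.exp_pos _).le)]
    refine ENNReal.ofReal_le_ofReal (hmc.trans (Real.exp_le_exp.2 ?_))
    have : m * ∫ d, g (d, θ) ∂P ≤ 0 := mul_nonpos_of_nonneg_of_nonpos (by linarith) h4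
    linarith
  -- tail bound
  have hSm : MeasurableSet {p | k < g p} := measurableSet_lt measurable_const hg
  have htail : J {p | k < g p} ≤ ENNReal.ofReal δ := by
    have hmm : Measurable fun p => ENNReal.ofReal (Real.exp (m * g p)) := by fun_prop
    have hQm : ∫⁻ p, ENNReal.ofReal (Real.exp (m * g p)) ∂Q ≤
        ENNReal.ofReal (Real.exp (n * (m ^ 2 * ε ^ 2 / 8))) := by
      rw [hQdef, lintegral_prod_symm _ hmm.aemeasurable]
      refine (lintegral_mono_ae hmom).trans ?_
      simp
    calc J {p | k < g p} = ∫⁻ p in {p | k < g p}, ENNReal.ofReal (Real.exp (g p)) ∂Q := by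
          rw [hJ, withDensity_apply _ hSm]
      _ ≤ ∫⁻ p in {p | k < g p}, ENNReal.ofReal (Real.exp (-((m - 1) * k))) *
            ENNReal.ofReal (Real.exp (m * g p)) ∂Q := by
          refine setLIntegral_mono (by fun_prop) fun p hp => ?_
          rw [← ENNReal.ofReal_mul (Real.exp_pos _).le, ← Real.exp_add]
          refine ENNReal.ofReal_le_ofReal (Real.exp_le_exp.2 ?_)
          have hp' : k < g p := hp
          nlinarith
      _ ≤ ∫⁻ p, ENNReal.ofReal (Real.exp (-((m - 1) * k))) *
            ENNReal.ofReal (Real.exp (m * g p)) ∂Q := setLIntegral_le_lintegral _ _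
      _ = ENNReal.ofReal (Real.exp (-((m - 1) * k))) *
            ∫⁻ p, ENNReal.ofReal (Real.exp (m * g p)) ∂Q := lintegral_const_mul _ hmm
      _ ≤ ENNReal.ofReal (Real.exp (-((m - 1) * k))) *
            ENNReal.ofReal (Real.exp (n * (m ^ 2 * ε ^ 2 / 8))) := by gcongr
      _ = ENNReal.ofReal (Real.exp (n * (m ^ 2 * ε ^ 2 / 8) - (m - 1) * k)) := by
          rw [← ENNReal.ofReal_mul (Real.exp_pos _).le, ← Real.exp_add]
          congr 2; ring
      _ ≤ ENNReal.ofReal δ := by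
          refine ENNReal.ofReal_le_ofReal ((Real.exp_le_exp.2 hexp).trans ?_)
          rw [Real.exp_neg, hL, Real.exp_log (by positivity), inv_div]
          linarith
  have hmain : J E ≤ ENNReal.ofReal (Real.exp k) * Q E + ENNReal.ofReal δ := by
    calc J E ≤ J (E \ {p | k < g p}) + J {p | k < g p} := by
          refine (measure_mono ?_).trans (measure_union_le _ _)
          intro p hp
          by_cases h : p ∈ {p | k < g p}
          · exact Or.inr h
          · exact Or.inl ⟨hp, h⟩
      _ ≤ _ := by
          refine add_le_add ?_ htail
          rw [hJ, withDensity_apply _ (hE.diff hSm)]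
          calc _ ≤ ∫⁻ _ in E \ {p | k < g p}, ENNReal.ofReal (Real.exp k) ∂Q := by
                refine setLIntegral_mono measurable_const fun p hp => ?_
                exact ENNReal.ofReal_le_ofReal (Real.exp_le_exp.2 (not_lt.1 hp.2))
            _ = ENNReal.ofReal (Real.exp k) * Q (E \ {p | k < g p}) := setLIntegral_const _ _
            _ ≤ _ := by gcongr; exact Set.sdiff_subset
  have hfin : ENNReal.ofReal (Real.exp k) * Q E ≠ ⊤ :=
    ENNReal.mul_ne_top ENNReal.ofReal_ne_top (measure_ne_top _ _)
  have h5 := ENNReal.toReal_mono (ENNReal.add_ne_top.2 ⟨hfin, ENNReal.ofReal_ne_top⟩) hmain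
  rw [ENNReal.toReal_add hfin ENNReal.ofReal_ne_top, ENNReal.toReal_mul,
    ENNReal.toReal_ofReal (Real.exp_pos _).le, ENNReal.toReal_ofReal hδ0.le] at h5
  linarith
end
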